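/- arXiv:1705.10200 — 2 statements merged into one kernel-verified Lean document; each statement's English description precedes it below -/
import Mathlib

section
/- There exists an algebra homomorphism U : Y(Q(n)) → U(Q(n)) determined on generators by U(T_{i,j}^{(r)}) = (−1)^r e_{j,i}^{(r)} and U(T_{−i,j}^{(r)}) = (−1)^r f_{j,i}^{(r)} for i, j > 0 and r > 0, and U(T_{i,j}^{(0)}) = δ_{i,j} (values on the remaining generators being forced by T_{−i,−j}^{(m)} = (−1)^m T_{i,j}^{(m)}). -/
noncomputable section
open scoped Classical

/-! # The universal enveloping superalgebra `U(Q(n))` of the queer Lie superalgebra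

`U(Q(n))` is presented by even generators `e i j` and odd generators `f i j`
(`1 ≤ i,j ≤ n`) subject to the relations
`[e i j, e k l] = δ_{jk} e i l - δ_{li} e k j`,
`[e i j, f k l] = δ_{jk} f i l - δ_{li} f k j`,
`f i j * f k l + f k l * f i j = δ_{jk} e i l + δ_{li} e k j`. -/

/-- Generators of `U(Q(n))`: `E i j` (even) and `F i j` (odd). -/
inductive QGen (n : ℕ) : Type
  | E : Fin n → Fin n → QGen n
  | F : Fin n → Fin n → QGen n

/-- Kronecker delta. -/
def kd {n : ℕ} (i j : Fin n) : ℂ := if i = j then 1 else 0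

/-- The defining relations of `U(Q(n))`. -/
inductive QRel (n : ℕ) : FreeAlgebra ℂ (QGen n) → FreeAlgebra ℂ (QGen n) → Prop
  | ee (i j k l : Fin n) : QRel n
      (FreeAlgebra.ι ℂ (QGen.E i j) * FreeAlgebra.ι ℂ (QGen.E k l) -
        FreeAlgebra.ι ℂ (QGen.E k l) * FreeAlgebra.ι ℂ (QGen.E i j))
      (kd j k • FreeAlgebra.ι ℂ (QGen.E i l) - kd l i • FreeAlgebra.ι ℂ (QGen.E k j))
  | ef (i j k l : Fin n) : QRel n
      (FreeAlgebra.ι ℂ (QGen.E i j) * FreeAlgebra.ι ℂ (QGen.F k l) -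
        FreeAlgebra.ι ℂ (QGen.F k l) * FreeAlgebra.ι ℂ (QGen.E i j))
      (kd j k • FreeAlgebra.ι ℂ (QGen.F i l) - kd l i • FreeAlgebra.ι ℂ (QGen.F k j))
  | ff (i j k l : Fin n) : QRel n
      (FreeAlgebra.ι ℂ (QGen.F i j) * FreeAlgebra.ι ℂ (QGen.F k l) +
        FreeAlgebra.ι ℂ (QGen.F k l) * FreeAlgebra.ι ℂ (QGen.F i j))
      (kd j k • FreeAlgebra.ι ℂ (QGen.E i l) + kd l i • FreeAlgebra.ι ℂ (QGen.E k j))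

/-- The universal enveloping superalgebra `U(Q(n))`. -/
abbrev UQ (n : ℕ) := RingQuot (QRel n)

/-- The generator `e i j` of `U(Q(n))`. -/
def Ue {n : ℕ} (i j : Fin n) : UQ n :=
  RingQuot.mkAlgHom ℂ (QRel n) (FreeAlgebra.ι ℂ (QGen.E i j))

/-- The generator `f i j` of `U(Q(n))`. -/
def Uf {n : ℕ} (i j : Fin n) : UQ n :=
  RingQuot.mkAlgHom ℂ (QRel n) (FreeAlgebra.ι ℂ (QGen.F i j))

/-- Sergeev's elements `e_{ij}^{(m)}` and `f_{ij}^{(m)}` of `U(Q(n))`, defined recursively by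
`e^{(0)} = δ`, `f^{(0)} = 0`,
`e_{ij}^{(m)} = Σ_k e_{ik} e_{kj}^{(m-1)} + (-1)^{m+1} Σ_k f_{ik} f_{kj}^{(m-1)}`,
`f_{ij}^{(m)} = Σ_k e_{ik} f_{kj}^{(m-1)} + (-1)^{m+1} Σ_k f_{ik} e_{kj}^{(m-1)}`. -/
def efU (n : ℕ) : ℕ → (Fin n → Fin n → UQ n) × (Fin n → Fin n → UQ n)
  | 0 => (fun i j => algebraMap ℂ (UQ n) (kd i j), fun _ _ => 0)
  | m + 1 =>
      (fun i j => (∑ k, Ue i k * (efU n m).1 k j) +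
        (-1 : ℂ) ^ m • ∑ k, Uf i k * (efU n m).2 k j,
       fun i j => (∑ k, Ue i k * (efU n m).2 k j) +
        (-1 : ℂ) ^ m • ∑ k, Uf i k * (efU n m).1 k j)

/-- `e_{ij}^{(m)}`. -/
def eU {n : ℕ} (m : ℕ) (i j : Fin n) : UQ n := (efU n m).1 i j
/-- `f_{ij}^{(m)}`. -/
def fU {n : ℕ} (m : ℕ) (i j : Fin n) : UQ n := (efU n m).2 i j

/-- For `l ∣ n`, the index `l(p-1)+i` of `{1,…,n}` (0-based: block `p`, position `i`). -/
def bidx {n l : ℕ} (h : l ∣ n) (p : Fin (n / l)) (i : Fin l) : Fin n :=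
  ⟨l * p.val + i.val, by
    have h1 : i.val < l := i.isLt
    have h2 : p.val + 1 ≤ n / l := p.isLt
    have h3 : l * (p.val + 1) ≤ l * (n / l) := Nat.mul_le_mul_left l h2
    have h4 : n / l * l ≤ n := Nat.div_mul_le_self n l
    have h5 : l * (p.val + 1) = l * p.val + l := Nat.mul_succ l p.val
    have h6 : l * (n / l) = n / l * l := Nat.mul_comm l (n / l)
    omega⟩

/-! # The character `χ`, the left ideal `I_χ` and the finite W-algebra data

Here `l ∣ n` and `χ` corresponds to the even nilpotent element of `Q(n)` all of whose
Jordan blocks have size `l`.  The subalgebra `m = ⊕_{j<0} g_j` is spanned by the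
elements `e_{l(p-1)+i+k, l(q-1)+i}` and `f_{l(p-1)+i+k, l(q-1)+i}` (`k ≥ 1`), and
`χ(e_{l(p-1)+i+1, l(q-1)+i}) = δ_{pq}` and `χ = 0` on the other basis elements. -/

/-- The set of elements `a - χ(a)` for `a` ranging over the standard basis of `m`;
(rows/columns written 0-based: `a` is the position of the row inside its block `p`,
`b` the position of the column inside its block `q`, with `b < a`). -/
def mSet (n l : ℕ) (h : l ∣ n) : Set (UQ n) :=
  { x : UQ n | ∃ (p q : Fin (n / l)) (a b : Fin l), b.val < a.val ∧
      (x = Ue (bidx h p a) (bidx h q b) -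
            algebraMap ℂ (UQ n) (if a.val = b.val + 1 ∧ p = q then 1 else 0) ∨
       x = Uf (bidx h p a) (bidx h q b)) }

/-- The left ideal `I_χ` of `U(Q(n))` generated by the `a - χ(a)`, `a ∈ m`. -/
def Ichi (n l : ℕ) (h : l ∣ n) : Submodule (UQ n) (UQ n) :=
  Submodule.span (UQ n) (mSet n l h)

/-- The quotient `U(Q(n))/I_χ` (as a `ℂ`-vector space). -/
abbrev Wq (n l : ℕ) (h : l ∣ n) := UQ n ⧸ (Ichi n l h).restrictScalars ℂ

/-- The quotient map `π : U(Q(n)) → U(Q(n))/I_χ`. -/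
def piq (n l : ℕ) (h : l ∣ n) : UQ n →ₗ[ℂ] Wq n l h :=
  ((Ichi n l h).restrictScalars ℂ).mkQ

/-- `y` super-commutes with `m` into `I_χ`:  `[a, y] ∈ I_χ` for every `a` in the standard
basis of `m`.  Here the super-commutator of the odd element `f` with (the possibly
non-homogeneous) `y` is `f * y - σ(y) * f`, where `σ` is the parity involution of
`U(Q(n))` (the algebra automorphism fixing the `e`'s and negating the `f`'s). -/
def Wcond {n l : ℕ} (h : l ∣ n) (σ : UQ n →ₐ[ℂ] UQ n) (y : UQ n) : Prop :=
  ∀ (p q : Fin (n / l)) (a b : Fin l), b.val < a.val →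
    (Ue (bidx h p a) (bidx h q b) * y - y * Ue (bidx h p a) (bidx h q b) ∈ Ichi n l h) ∧
    (Uf (bidx h p a) (bidx h q b) * y - σ y * Uf (bidx h p a) (bidx h q b) ∈ Ichi n l h)

/-- The finite W-algebra `W_χ = {π(y) | [a, y] ∈ I_χ for all a ∈ m}`, as a subset of
`U(Q(n))/I_χ`.  (Its product is `π(y₁)·π(y₂) = π(y₁y₂)`.) -/
def WchiSet (n l : ℕ) (h : l ∣ n) (σ : UQ n →ₐ[ℂ] UQ n) : Set (Wq n l h) :=
  { w : Wq n l h | ∃ y : UQ n, Wcond h σ y ∧ piq n l h y = w }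

/-- The standard basis elements of the parabolic subalgebra `p = ⊕_{j≥0} g_j`. -/
def pSet (n l : ℕ) (h : l ∣ n) : Set (UQ n) :=
  { x : UQ n | ∃ (p q : Fin (n / l)) (a b : Fin l), a.val ≤ b.val ∧
      (x = Ue (bidx h p a) (bidx h q b) ∨ x = Uf (bidx h p a) (bidx h q b)) }

/-- The standard basis elements of the nilradical `n = ⊕_{j>0} g_j` of `p`. -/
def nSet (n l : ℕ) (h : l ∣ n) : Set (UQ n) :=
  { x : UQ n | ∃ (p q : Fin (n / l)) (a b : Fin l), a.val < b.val ∧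
      (x = Ue (bidx h p a) (bidx h q b) ∨ x = Uf (bidx h p a) (bidx h q b)) }

/-- The kernel of the Harish-Chandra projection `ϑ : U(p) → U(g₀)`, realized inside
`U(Q(n))`: the `ℂ`-span of `U(p)·n`.  (By the PBW theorem, `U(g) = U(p) ⊕ I_χ` and
`U(p) = U(g₀) ⊕ U(p)n`, so for `y ∈ U(g)`, `ϑ(pr(y)) = t` iff
`y - t ∈ I_χ + U(p)n`.) -/
def Lspan (n l : ℕ) (h : l ∣ n) : Submodule ℂ (UQ n) :=
  Submodule.span ℂ
    { x : UQ n | ∃ u ∈ Algebra.adjoin ℂ (pSet n l h), ∃ g ∈ nSet n l h, x = u * g }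

/-- A descriptor of a generator of `U(p)`:  `(b, p, q, a, c)` is
`e_{l(p-1)+(a+1), l(q-1)+(c+1)}` if `b = false` and `f_{…}` if `b = true`
(required: `a ≤ c`). -/
def pgElem {n l : ℕ} (h : l ∣ n) :
    Bool × Fin (n / l) × Fin (n / l) × Fin l × Fin l → UQ n
  | (b, p, q, a, c) => (if b then Uf else Ue) (bidx h p a) (bidx h q c)

/-- Kazhdan degree `2k+2` of a `p`-generator of block offset `k = c - a`. -/
def pgDeg {l m : ℕ} (d : Bool × Fin m × Fin m × Fin l × Fin l) : ℕ :=
  2 * (d.2.2.2.2.val - d.2.2.2.1.val) + 2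

/-- Weight `2k` of a `p`-generator of block offset `k = c - a`. -/
def pgWt {l m : ℕ} (d : Bool × Fin m × Fin m × Fin l × Fin l) : ℕ :=
  2 * (d.2.2.2.2.val - d.2.2.2.1.val)

/-- Monomials in the generators of `U(p)` which are "lower" than bidegree
(Kazhdan degree `D`, weight `W`): either of Kazhdan degree `< D`, or of Kazhdan
degree `≤ D` and weight `< W`. -/
def LowSet (n l : ℕ) (h : l ∣ n) (D W : ℕ) : Set (UQ n) :=
  { x : UQ n | ∃ L : List (Bool × Fin (n / l) × Fin (n / l) × Fin l × Fin l),
      (∀ d ∈ L, d.2.2.2.1.val ≤ d.2.2.2.2.val) ∧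
      x = (L.map (pgElem h)).prod ∧
      ((L.map pgDeg).sum < D ∨ ((L.map pgDeg).sum ≤ D ∧ (L.map pgWt).sum < W)) }

/-- The span of the "lower" monomials. -/
def LowSpan (n l : ℕ) (h : l ∣ n) (D W : ℕ) : Submodule ℂ (UQ n) :=
  Submodule.span ℂ (LowSet n l h D W)

/-! # The super tensor power `U(Q(m))^{⊗l}`

Modeled as the superalgebra with generators `x^i_{pq} = 1^{⊗(l-i)} ⊗ e_{pq} ⊗ 1^{⊗(i-1)}`
(even) and `ξ^i_{pq} = 1^{⊗(l-i)} ⊗ f_{pq} ⊗ 1^{⊗(i-1)}` (odd), subject to the `U(Q(m))`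
relations in each tensor slot and to (super-)commutation between different slots. -/

/-- Generators of `U(Q(m))^{⊗l}`: `X i p q` is `x^i_{pq}` and `Xi i p q` is `ξ^i_{pq}`
(`i : Fin l` is the 0-based tensor slot, counted from the right). -/
inductive TGen (m l : ℕ) : Type
  | X : Fin l → Fin m → Fin m → TGen m l
  | Xi : Fin l → Fin m → Fin m → TGen m l

/-- Kronecker delta on slots. -/
def kdl {l : ℕ} (i j : Fin l) : ℂ := if i = j then 1 else 0

/-- The defining relations of `U(Q(m))^{⊗l}`. -/
inductive TRel (m l : ℕ) : FreeAlgebra ℂ (TGen m l) → FreeAlgebra ℂ (TGen m l) → Prop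
  | xx (i i' : Fin l) (p q r s : Fin m) : TRel m l
      (FreeAlgebra.ι ℂ (TGen.X i p q) * FreeAlgebra.ι ℂ (TGen.X i' r s) -
        FreeAlgebra.ι ℂ (TGen.X i' r s) * FreeAlgebra.ι ℂ (TGen.X i p q))
      ((kdl i i' * kd q r) • FreeAlgebra.ι ℂ (TGen.X i p s) -
        (kdl i i' * kd s p) • FreeAlgebra.ι ℂ (TGen.X i' r q))
  | xxi (i i' : Fin l) (p q r s : Fin m) : TRel m l
      (FreeAlgebra.ι ℂ (TGen.X i p q) * FreeAlgebra.ι ℂ (TGen.Xi i' r s) -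
        FreeAlgebra.ι ℂ (TGen.Xi i' r s) * FreeAlgebra.ι ℂ (TGen.X i p q))
      ((kdl i i' * kd q r) • FreeAlgebra.ι ℂ (TGen.Xi i p s) -
        (kdl i i' * kd s p) • FreeAlgebra.ι ℂ (TGen.Xi i' r q))
  | xixi (i i' : Fin l) (p q r s : Fin m) : TRel m l
      (FreeAlgebra.ι ℂ (TGen.Xi i p q) * FreeAlgebra.ι ℂ (TGen.Xi i' r s) +
        FreeAlgebra.ι ℂ (TGen.Xi i' r s) * FreeAlgebra.ι ℂ (TGen.Xi i p q))
      ((kdl i i' * kd q r) • FreeAlgebra.ι ℂ (TGen.X i p s) +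
        (kdl i i' * kd s p) • FreeAlgebra.ι ℂ (TGen.X i' r q))

/-- The superalgebra `U(Q(m))^{⊗l}`. -/
abbrev TQ (m l : ℕ) := RingQuot (TRel m l)

/-- `x^i_{pq} := 1^{⊗(l-i)} ⊗ e_{pq} ⊗ 1^{⊗(i-1)} ∈ U(Q(m))^{⊗l}`. -/
def xT {m l : ℕ} (i : Fin l) (p q : Fin m) : TQ m l :=
  RingQuot.mkAlgHom ℂ (TRel m l) (FreeAlgebra.ι ℂ (TGen.X i p q))

/-- `ξ^i_{pq} := 1^{⊗(l-i)} ⊗ f_{pq} ⊗ 1^{⊗(i-1)} ∈ U(Q(m))^{⊗l}`. -/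
def xiT {m l : ℕ} (i : Fin l) (p q : Fin m) : TQ m l :=
  RingQuot.mkAlgHom ℂ (TRel m l) (FreeAlgebra.ι ℂ (TGen.Xi i p q))

/-! # The super-Yangian `Y(Q(n))` -/

/-- The index set `{±1, …, ±n}`:  `(false, a)` is the positive index `a` (even),
`(true, a)` is the negative index `-a` (odd). -/
abbrev QIdx (n : ℕ) := Bool × Fin n

/-- Negation `i ↦ -i` on indices. -/
def qneg {n : ℕ} (i : QIdx n) : QIdx n := (!i.1, i.2)

/-- The parity `p(i)`: `0` for positive `i`, `1` for negative `i`. -/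
def qpar {n : ℕ} (i : QIdx n) : ℕ := if i.1 then 1 else 0

/-- Kronecker delta on `{±1, …, ±n}`. -/
def kdq {n : ℕ} (i j : QIdx n) : ℂ := if i = j then 1 else 0

/-- Generators of `Y(Q(n))`: `T m i j` encodes `T^{(m+1)}_{i,j}`. -/
inductive YGen (n : ℕ) : Type
  | T : ℕ → QIdx n → QIdx n → YGen n

/-- `T^{(m)}_{i,j}` in the free algebra, with `T^{(0)}_{i,j} = δ_{ij}`. -/
def Tf {n : ℕ} : ℕ → QIdx n → QIdx n → FreeAlgebra ℂ (YGen n)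
  | 0, i, j => algebraMap ℂ _ (kdq i j)
  | m + 1, i, j => FreeAlgebra.ι ℂ (YGen.T m i j)

/-- The super-commutator `[T^{(a)}_{i,j}, T^{(b)}_{k,l}]` in the free algebra. -/
def ybr {n : ℕ} (a : ℕ) (i j : QIdx n) (b : ℕ) (k l : QIdx n) :
    FreeAlgebra ℂ (YGen n) :=
  Tf a i j * Tf b k l -
    ((-1 : ℂ) ^ ((qpar i + qpar j) * (qpar k + qpar l))) • (Tf b k l * Tf a i j)

/-- The defining relations of the super-Yangian `Y(Q(n))`: for `M, R ≥ 1`,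
`(-1)^{p(i)p(k)+p(i)p(l)+p(k)p(l)} ([T^{(M+1)}_{ij}, T^{(R-1)}_{kl}] - [T^{(M-1)}_{ij}, T^{(R+1)}_{kl}])
 = T^{(M)}_{kj}T^{(R-1)}_{il} + T^{(M-1)}_{kj}T^{(R)}_{il} - T^{(R-1)}_{kj}T^{(M)}_{il}
   - T^{(R)}_{kj}T^{(M-1)}_{il}
   + (-1)^{p(k)+p(l)} (-T^{(M)}_{-k,j}T^{(R-1)}_{-i,l} + T^{(M-1)}_{-k,j}T^{(R)}_{-i,l}
       + T^{(R-1)}_{k,-j}T^{(M)}_{i,-l} - T^{(R)}_{k,-j}T^{(M-1)}_{i,-l})`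
(here `M = m+1`, `R = r+1`), together with `T^{(m)}_{-i,-j} = (-1)^m T^{(m)}_{i,j}`. -/
inductive YRel (n : ℕ) : FreeAlgebra ℂ (YGen n) → FreeAlgebra ℂ (YGen n) → Prop
  | quad (m r : ℕ) (i j k l : QIdx n) : YRel n
      (((-1 : ℂ) ^ (qpar i * qpar k + qpar i * qpar l + qpar k * qpar l)) •
        (ybr (m + 2) i j r k l - ybr m i j (r + 2) k l))
      (Tf (m + 1) k j * Tf r i l + Tf m k j * Tf (r + 1) i l -
        Tf r k j * Tf (m + 1) i l - Tf (r + 1) k j * Tf m i l +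
        ((-1 : ℂ) ^ (qpar k + qpar l)) •
          (-(Tf (m + 1) (qneg k) j * Tf r (qneg i) l) +
            Tf m (qneg k) j * Tf (r + 1) (qneg i) l +
            Tf r k (qneg j) * Tf (m + 1) i (qneg l) -
            Tf (r + 1) k (qneg j) * Tf m i (qneg l)))
  | par (m : ℕ) (i j : QIdx n) : YRel n
      (Tf (m + 1) (qneg i) (qneg j)) (((-1 : ℂ) ^ (m + 1)) • Tf (m + 1) i j)

/-- The super-Yangian `Y(Q(n))`. -/
abbrev YQ (n : ℕ) := RingQuot (YRel n)

/-- The generator `T^{(m)}_{i,j}` of `Y(Q(n))` (with `T^{(0)}_{i,j} = δ_{ij}`). -/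
def TY {n : ℕ} (m : ℕ) (i j : QIdx n) : YQ n :=
  RingQuot.mkAlgHom ℂ (YRel n) (Tf m i j)

/-! # Values of the homomorphisms `U`, `ev`, `ēv` on the generators of `Y(Q(n))`,
and the explicit sums appearing in the main theorems. -/

/-- The value of the homomorphism `U : Y(Q(n)) → U(Q(n))` on the generator
`T^{(r)}_{i,j}`:  `U(T^{(r)}_{i,j}) = (-1)^r e^{(r)}_{j,i}`,
`U(T^{(r)}_{-i,j}) = (-1)^r f^{(r)}_{j,i}` for `i, j > 0`, and the values on the other
generators are forced by `T^{(r)}_{-i,-j} = (-1)^r T^{(r)}_{i,j}`. -/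
def Uval {n : ℕ} (r : ℕ) (i j : QIdx n) : UQ n :=
  (if j.1 then (-1 : ℂ) ^ r else 1) •
    ((-1 : ℂ) ^ r • (if xor i.1 j.1 then fU r j.2 i.2 else eU r j.2 i.2))

/-- The value of the evaluation homomorphism `ev : Y(Q(n)) → U(Q(n))` on `T^{(r)}_{i,j}`:
`ev(T^{(1)}_{i,j}) = -e_{j,i}`, `ev(T^{(1)}_{-i,j}) = -f_{j,i}` for `i, j > 0`,
`ev(T^{(0)}_{i,j}) = δ_{ij}` and `ev(T^{(r)}_{i,j}) = 0` for `r > 1` (with the values on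
the remaining generators forced by `T^{(r)}_{-i,-j} = (-1)^r T^{(r)}_{i,j}`). -/
def evval {n : ℕ} (r : ℕ) (i j : QIdx n) : UQ n :=
  (if j.1 then (-1 : ℂ) ^ r else 1) •
    (match r with
      | 0 => if xor i.1 j.1 then 0 else algebraMap ℂ (UQ n) (kd i.2 j.2)
      | 1 => -(if xor i.1 j.1 then Uf j.2 i.2 else Ue j.2 i.2)
      | _ + 2 => 0)

/-- The value of `ēv = α ∘ ev : Y(Q(n)) → U(Q(n))` on `T^{(r)}_{i,j}`, where `α` is the
principal anti-automorphism of `U(Q(n))`:  `ēv(T^{(1)}_{i,j}) = e_{j,i}`,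
`ēv(T^{(1)}_{-i,j}) = f_{j,i}` for `i, j > 0`, `ēv(T^{(0)}_{i,j}) = δ_{ij}`,
`ēv(T^{(r)}_{i,j}) = 0` for `r > 1`. -/
def bevval {n : ℕ} (r : ℕ) (i j : QIdx n) : UQ n :=
  (if j.1 then (-1 : ℂ) ^ r else 1) •
    (match r with
      | 0 => if xor i.1 j.1 then 0 else algebraMap ℂ (UQ n) (kd i.2 j.2)
      | 1 => (if xor i.1 j.1 then Uf j.2 i.2 else Ue j.2 i.2)
      | _ + 2 => 0)

/-- The sum `Σ_{p_1,…,p_{r-1}} Σ_{l ≥ i_1 ≥ i_2 ≥ … ≥ i_r ≥ 1}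
Π_{a=1}^r (x^{i_a}_{p_{a-1},p_a} + (-1)^{r-a} ξ^{i_a}_{p_{a-1},p_a})`
(with `p_0 = p`, `p_r = q`), an element of `U(Q(m))^{⊗l}`. -/
def chainProdDec (m l : ℕ) (r : ℕ) (p q : Fin m) : TQ m l :=
  ∑ c : Fin (r + 1) → Fin m, ∑ iv : Fin r → Fin l,
    (if c 0 = p ∧ c (Fin.last r) = q ∧ (∀ a b : Fin r, a ≤ b → iv b ≤ iv a)
      then (1 : ℂ) else 0) •
      (List.ofFn fun a : Fin r =>
        xT (iv a) (c a.castSucc) (c a.succ) +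
          ((-1 : ℂ) ^ (r - 1 - a.val)) • xiT (iv a) (c a.castSucc) (c a.succ)).prod

/-- The sum `Σ_{p_1,…,p_{r-1}} Σ_{1 ≤ i_1 < i_2 < … < i_r ≤ l}
Π_{a=1}^r (x^{i_a}_{p_{a-1},p_a} + (-1)^{r-a} ξ^{i_a}_{p_{a-1},p_a})`
(with `p_0 = p`, `p_r = q`), an element of `U(Q(m))^{⊗l}`. -/
def chainProdInc (m l : ℕ) (r : ℕ) (p q : Fin m) : TQ m l :=
  ∑ c : Fin (r + 1) → Fin m, ∑ iv : Fin r → Fin l,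
    (if c 0 = p ∧ c (Fin.last r) = q ∧ (∀ a b : Fin r, a < b → iv a < iv b)
      then (1 : ℂ) else 0) •
      (List.ofFn fun a : Fin r =>
        xT (iv a) (c a.castSucc) (c a.succ) +
          ((-1 : ℂ) ^ (r - 1 - a.val)) • xiT (iv a) (c a.castSucc) (c a.succ)).prod

/-- The elements `z^{(r)}_{±q,p}` of `U(Q(m))^{⊗l}`:  the even (`sgn = false`,
giving `z^{(r)}_{q,p}`) resp. odd (`sgn = true`, giving `z^{(r)}_{-q,p}`) component of
`chainProdDec`, computed using the parity involution `σT` of `U(Q(m))^{⊗l}`;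
`z^{(0)}_{q,p} = δ_{qp}`, `z^{(0)}_{-q,p} = 0`. -/
def zDec {m l : ℕ} (σT : TQ m l →ₐ[ℂ] TQ m l) :
    ℕ → Bool → Fin m → Fin m → TQ m l
  | 0, sgn, q, p => if sgn then 0 else algebraMap ℂ (TQ m l) (kd q p)
  | r + 1, sgn, q, p =>
      (2⁻¹ : ℂ) • (chainProdDec m l (r + 1) p q +
        (if sgn then (-1 : ℂ) else 1) • σT (chainProdDec m l (r + 1) p q))

/-- The elements `z̃^{(r)}_{±q,p}` of `U(Q(m))^{⊗l}` (as `zDec`, with increasing chains). -/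
def zInc {m l : ℕ} (σT : TQ m l →ₐ[ℂ] TQ m l) :
    ℕ → Bool → Fin m → Fin m → TQ m l
  | 0, sgn, q, p => if sgn then 0 else algebraMap ℂ (TQ m l) (kd q p)
  | r + 1, sgn, q, p =>
      (2⁻¹ : ℂ) • (chainProdInc m l (r + 1) p q +
        (if sgn then (-1 : ℂ) else 1) • σT (chainProdInc m l (r + 1) p q))

/-- The explicit formula for the antipode value `S(T^{(r)}_{i,j})` (`r ≥ 1`):
`S(T^{(r)}_{i,j}) = Σ_{m=1}^{r} (-1)^m Σ_{i_1,…,i_{m-1}} Σ_{r_1+⋯+r_m=r, r_a>0}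
(-1)^{ν(i,i_1,…,i_{m-1},j)} T^{(r_1)}_{i,i_1} ⋯ T^{(r_m)}_{i_{m-1},j}` where
`ν(i_0,…,i_m) = Σ_{0≤k<s≤m-1} (p(i_k)+p(i_{k+1}))(p(i_s)+p(i_{s+1}))`. -/
def STval {n : ℕ} (r : ℕ) (i j : QIdx n) : YQ n :=
  ∑ m : Fin r,
    ((-1 : ℂ) ^ (m.val + 1)) •
      ∑ ch : Fin (m.val + 2) → QIdx n, ∑ c : Fin (m.val + 1) → Fin (r + 1),
        (if ch 0 = i ∧ ch (Fin.last (m.val + 1)) = j ∧ (∀ a, 1 ≤ (c a).val) ∧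
              (∑ a, (c a).val) = r
          then ((-1 : ℂ) ^ (∑ a : Fin (m.val + 1), ∑ b : Fin (m.val + 1),
              if a < b then
                (qpar (ch a.castSucc) + qpar (ch a.succ)) *
                  (qpar (ch b.castSucc) + qpar (ch b.succ))
              else 0))
          else 0) •
        (List.ofFn fun a : Fin (m.val + 1) =>
          TY (c a).val (ch a.castSucc) (ch a.succ)).prod

/-!
Collect the generators of `U(Q(n))` into the block matrix `S = -[[e, f], [-f, -e]]` indexed by
`{±1, …, ±n}`. Sergeev's elements are, up to sign, the entries of the powers of `S`, and the
homomorphism is `T^{(m)}_{i,j} ↦ (S ^ m)_{j,i}`. In the tensor square write `x` and `y` for the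
copies of `S` on the two legs and `ω r` for the flip plus `(-1) ^ r` times the flip twisted by
`i ↦ -i`. Since `S` is odd under negation of indices, `ω r` intertwines `y` with `x` and becomes
`ω (r + 1)` in the process. Hence the defining bracket `⁅x, y⁆ = ⁅ω 1, x⁆` says that `x + ω 0`
commutes with `y`, so it also commutes with `y ^ r`, which means `⁅x, y ^ r⁆ = ⁅ω r, x ^ r⁆`.
As `ω (r + 2) = ω r`, the difference `⁅x ^ (m + 2), y ^ r⁆ - ⁅x ^ m, y ^ (r + 2)⁆` telescopes to
four terms, and its entries are the quadratic relation of the Yangian.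
-/

section RingIdentities

variable {R : Type*} [Ring R] {x y : R}

theorem mul_pow_eq_pow_mul_of_twisted {a b : R} {ω : ℕ → R}
    (h : ∀ s, ω s * b = a * ω (s + 1)) (s r : ℕ) : ω s * b ^ r = a ^ r * ω (s + r) := by
  induction r with
  | zero => simp
  | succ r ih => rw [pow_succ, ← mul_assoc, ih, mul_assoc, h, ← mul_assoc, ← pow_succ, add_assoc]

theorem pow_mul_eq_mul_pow_of_twisted {a b : R} {ω : ℕ → R}
    (h : ∀ s, b * ω s = ω (s + 1) * a) (s r : ℕ) : b ^ r * ω s = ω (s + r) * a ^ r := by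
  induction r with
  | zero => simp
  | succ r ih => rw [pow_succ', mul_assoc, ih, ← mul_assoc, h, mul_assoc, ← pow_succ', add_assoc]

theorem lie_pow_eq_of_twisted {ω : ℕ → R} (hright : ∀ s, ω s * y = x * ω (s + 1))
    (hleft : ∀ s, y * ω s = ω (s + 1) * x) (hlie : ⁅x, y⁆ = ⁅ω 1, x⁆) (r : ℕ) :
    ⁅x, y ^ r⁆ = ⁅ω r, x ^ r⁆ := by
  have hcomm : Commute (x + ω 0) y := by
    rw [Ring.lie_def, Ring.lie_def, sub_eq_sub_iff_add_eq_add] at hlie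
    rw [commute_iff_eq, add_mul, mul_add, hright, hleft, hlie, add_comm]
  have hpow := (hcomm.pow_right r).eq
  have hr := mul_pow_eq_pow_mul_of_twisted hright 0 r
  have hl := pow_mul_eq_mul_pow_of_twisted hleft 0 r
  rw [add_mul, mul_add, hr, hl, zero_add] at hpow
  rw [Ring.lie_def, Ring.lie_def, sub_eq_sub_iff_add_eq_add, hpow, add_comm]

theorem lie_pow_sub_lie_pow {z w ω : R} {r : ℕ} (hz : ⁅x, z⁆ = ⁅ω, x ^ r⁆)
    (hw : ⁅x, w⁆ = ⁅ω, x ^ (r + 2)⁆) (m : ℕ) :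
    ⁅x ^ (m + 2), z⁆ - ⁅x ^ m, w⁆ =
      x ^ m * ω * x ^ (r + 1) + x ^ (m + 1) * ω * x ^ r -
        x ^ r * ω * x ^ (m + 1) - x ^ (r + 1) * ω * x ^ m := by
  have leibniz (k : ℕ) (v : R) : ⁅x ^ (k + 1), v⁆ = x * ⁅x ^ k, v⁆ + ⁅x, v⁆ * x ^ k := by
    simp only [Ring.lie_def, pow_succ']
    noncomm_ring
  induction m with
  | zero =>
    have hcomm : x * x ^ r = x ^ r * x := (Commute.self_pow x r).eq
    have hone : ⁅x ^ 0, w⁆ = 0 := by rw [pow_zero, Ring.lie_def, one_mul, mul_one, sub_self]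
    rw [hone, sub_zero, leibniz, zero_add, pow_one, hz, Ring.lie_def, pow_succ, pow_zero]
    simp only [one_mul, mul_one, mul_sub, sub_mul, ← mul_assoc, hcomm]
    simp only [mul_assoc]
    abel
  | succ m ih =>
    have step : ⁅x ^ (m + 1 + 2), z⁆ - ⁅x ^ (m + 1), w⁆ =
        x * (⁅x ^ (m + 2), z⁆ - ⁅x ^ m, w⁆) + (⁅x, z⁆ * x ^ (m + 2) - ⁅x, w⁆ * x ^ m) := by
      rw [add_right_comm, leibniz (m + 2), leibniz m]
      noncomm_ring
    have telescope : ⁅x, z⁆ * x ^ (m + 2) - ⁅x, w⁆ * x ^ m =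
        x ^ (r + 2) * ω * x ^ m - x ^ r * ω * x ^ (m + 2) := by
      rw [hz, hw, Ring.lie_def, Ring.lie_def, sub_mul, sub_mul, mul_assoc ω, mul_assoc ω,
        ← pow_add, ← pow_add, add_right_comm r, add_assoc]
      abel
    rw [step, ih, telescope]
    simp only [mul_sub, mul_add, ← mul_assoc, ← pow_succ']
    abel

end RingIdentities

section SignedIndices

variable {n : ℕ} {A : Type*} [Ring A] [Algebra ℂ A]

theorem kd_comm (i j : Fin n) : kd i j = kd j i := by
  simp only [kd, eq_comm]

theorem kdq_mk (a b : Bool) (i j : Fin n) : kdq (a, i) (b, j) = if a = b then kd i j else 0 := by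
  simp [kdq, kd, ite_and]

theorem qpar_false (i : Fin n) : qpar (false, i) = 0 :=
  rfl

theorem qpar_true (i : Fin n) : qpar (true, i) = 1 :=
  rfl

theorem qneg_qneg (i : QIdx n) : qneg (qneg i) = i := by
  simp [qneg]

/-- The embedding `X ↦ X ⊗ 1` of matrices on the first leg of the tensor square of `ℂ^{n|n}`; rows
and columns of the tensor square are indexed by pairs of signed indices. -/
def leftLeg : Matrix (QIdx n) (QIdx n) A →* Matrix (QIdx n × QIdx n) (QIdx n × QIdx n) A where
  toFun X := .of fun a b => kdq a.2 b.2 • X a.1 b.1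
  map_one' := by
    ext ⟨p, l⟩ ⟨q, k⟩
    by_cases hp : p = q <;> by_cases hl : l = k <;> simp [hp, hl, kdq, Matrix.one_apply]
  map_mul' X Y := by
    ext ⟨p, l⟩ ⟨q, k⟩
    rw [Matrix.mul_apply, Fintype.sum_prod_type]
    simp [Matrix.mul_apply, kdq, Finset.smul_sum]

theorem leftLeg_apply (X : Matrix (QIdx n) (QIdx n) A) (p l q k : QIdx n) :
    leftLeg X (p, l) (q, k) = kdq l k • X p q :=
  rfl

/-- The super embedding `X ↦ 1 ⊗ X` on the second leg: moving the matrix unit with row `l` and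
column `k`, of parity `p(l) + p(k)`, past the basis vector `a` of the first leg costs the sign
`(-1)^{p(a)(p(l) + p(k))}`. -/
def rightLeg : Matrix (QIdx n) (QIdx n) A →* Matrix (QIdx n × QIdx n) (QIdx n × QIdx n) A where
  toFun X := .of fun a b =>
    kdq a.1 b.1 • (-1 : ℂ) ^ (qpar a.1 * (qpar a.2 + qpar b.2)) • X a.2 b.2
  map_one' := by
    ext ⟨p, l⟩ ⟨q, k⟩
    by_cases hp : p = q <;> by_cases hl : l = k <;>
      simp [hp, hl, kdq, Matrix.one_apply, ← two_mul, mul_left_comm _ 2]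
  map_mul' X Y := by
    ext ⟨p, l⟩ ⟨q, k⟩
    have hsign (y : QIdx n) : (-1 : ℂ) ^ (qpar p * (qpar l + qpar k)) =
        (-1) ^ (qpar p * (qpar y + qpar k)) * (-1) ^ (qpar p * (qpar l + qpar y)) := by
      rw [← pow_add]
      exact neg_one_pow_congr (by grind)
    rw [Matrix.mul_apply, Fintype.sum_prod_type]
    by_cases hp : p = q
    · subst hp
      simpa [Matrix.mul_apply, kdq, Finset.smul_sum, smul_smul] using
        Finset.sum_congr rfl fun y _ => by rw [hsign y]
    · simp [kdq, hp]

theorem rightLeg_apply (X : Matrix (QIdx n) (QIdx n) A) (p l q k : QIdx n) :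
    rightLeg X (p, l) (q, k) =
      kdq p q • (-1 : ℂ) ^ (qpar p * (qpar l + qpar k)) • X l k :=
  rfl

/-- The super flip of the tensor square plus `(-1) ^ r` times its twist by `i ↦ -i` on both legs.
These combine the two halves of the Yangian relation, the one without and the one with negated
indices. -/
def gradedFlip (n : ℕ) (A : Type*) [Ring A] [Algebra ℂ A] (r : ℕ) :
    Matrix (QIdx n × QIdx n) (QIdx n × QIdx n) A :=
  .of fun a b => (-1 : ℂ) ^ (qpar a.1 * qpar b.1) •
    ((1 : Matrix (QIdx n × QIdx n) (QIdx n × QIdx n) A) a (b.2, b.1) + (-1 : ℂ) ^ r •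
      (1 : Matrix (QIdx n × QIdx n) (QIdx n × QIdx n) A) a (qneg b.2, qneg b.1))

theorem mul_gradedFlip_apply (M : Matrix (QIdx n × QIdx n) (QIdx n × QIdx n) A) (r : ℕ)
    (a : QIdx n × QIdx n) (q k : QIdx n) :
    (M * gradedFlip n A r) a (q, k) = (-1 : ℂ) ^ (qpar k * qpar q) • M a (k, q) +
      (-1 : ℂ) ^ (qpar (qneg k) * qpar q + r) • M a (qneg k, qneg q) := by
  simp [Matrix.mul_apply, gradedFlip, Matrix.one_apply, Finset.sum_add_distrib, mul_add,
    smul_smul, pow_add]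

theorem gradedFlip_mul_apply (M : Matrix (QIdx n × QIdx n) (QIdx n × QIdx n) A) (r : ℕ)
    (p l : QIdx n) (b : QIdx n × QIdx n) :
    (gradedFlip n A r * M) (p, l) b = (-1 : ℂ) ^ (qpar p * qpar l) • M (l, p) b +
      (-1 : ℂ) ^ (qpar p * qpar (qneg l) + r) • M (qneg l, qneg p) b := by
  have hswap (c : QIdx n × QIdx n) : (p, l) = (c.2, c.1) ↔ c = (l, p) := by
    simp [Prod.ext_iff, eq_comm, and_comm]
  have hneg (c : QIdx n × QIdx n) : (p, l) = (qneg c.2, qneg c.1) ↔ c = (qneg l, qneg p) := by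
    constructor
    · intro h
      rw [Prod.mk.injEq] at h
      rw [h.1, h.2, qneg_qneg, qneg_qneg]
    · rintro rfl
      simp only [qneg_qneg]
  simp [Matrix.mul_apply, gradedFlip, Matrix.one_apply, Finset.sum_add_distrib, add_mul,
    smul_smul, pow_add, hswap, hneg]

theorem gradedFlip_add_two (r : ℕ) : gradedFlip n A (r + 2) = gradedFlip n A r := by
  simp [gradedFlip, pow_add]

theorem lie_leftLeg_rightLeg_apply (X Y : Matrix (QIdx n) (QIdx n) A) (p l q k : QIdx n) :
    ⁅leftLeg X, rightLeg Y⁆ (p, l) (q, k) =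
      (-1 : ℂ) ^ (qpar q * (qpar l + qpar k)) • (X p q * Y l k) -
        (-1 : ℂ) ^ (qpar p * (qpar l + qpar k)) • (Y l k * X p q) := by
  rw [Ring.lie_def, Matrix.sub_apply, Matrix.mul_apply, Matrix.mul_apply, Fintype.sum_prod_type,
    Fintype.sum_prod_type (f := fun _ => rightLeg Y _ _ * _)]
  simp [leftLeg_apply, rightLeg_apply, kdq]

theorem leftLeg_mul_gradedFlip_mul_leftLeg_apply (X Y : Matrix (QIdx n) (QIdx n) A) (r : ℕ)
    (p l q k : QIdx n) :
    (leftLeg X * gradedFlip n A r * leftLeg Y) (p, l) (q, k) =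
      (-1 : ℂ) ^ (qpar k * qpar l) • (X p k * Y l q) +
        (-1 : ℂ) ^ (qpar (qneg k) * qpar (qneg l) + r) • (X p (qneg k) * Y (qneg l) q) := by
  have hneg (x : QIdx n) : qneg x = k ↔ x = qneg k := by
    constructor <;> rintro rfl <;> rw [qneg_qneg]
  rw [mul_assoc, Matrix.mul_apply, Fintype.sum_prod_type]
  simp [leftLeg_apply, gradedFlip_mul_apply, kdq, hneg, mul_add, Finset.sum_add_distrib]

/-- A matrix `S` over `A` indexed by `{±1, …, ±n}` is queer if it is odd under simultaneous negation
of its indices and its entries satisfy the bracket relations of `Q(n)`, written without indices as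
an identity in the tensor square. -/
structure IsQueerMatrix (S : Matrix (QIdx n) (QIdx n) A) : Prop where
  apply_qneg_qneg (i j : QIdx n) : S (qneg i) (qneg j) = -S i j
  bracket : ⁅leftLeg S, rightLeg S⁆ = ⁅gradedFlip n A 1, leftLeg S⁆

namespace IsQueerMatrix

variable {S : Matrix (QIdx n) (QIdx n) A}

theorem pow_apply_qneg_qneg (hS : IsQueerMatrix S) (m : ℕ) (i j : QIdx n) :
    (S ^ m) (qneg i) (qneg j) = (-1 : ℂ) ^ m • (S ^ m) i j := by
  let σ : Equiv.Perm (QIdx n) := ⟨qneg, qneg, qneg_qneg, qneg_qneg⟩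
  have hsub : Matrix.reindexAlgEquiv ℂ A σ S = (-1 : ℂ) • S := by
    ext i j
    simpa [σ, Matrix.coe_reindexAlgEquiv] using hS.apply_qneg_qneg i j
  have hpow : Matrix.reindexAlgEquiv ℂ A σ (S ^ m) = (-1 : ℂ) ^ m • S ^ m := by
    rw [map_pow, hsub, smul_pow]
  exact congr_fun₂ hpow i j

theorem gradedFlip_mul_rightLeg (hS : IsQueerMatrix S) (r : ℕ) :
    gradedFlip n A r * rightLeg S = leftLeg S * gradedFlip n A (r + 1) := by
  ext ⟨⟨p, a⟩, ⟨l, b⟩⟩ ⟨⟨q, c⟩, ⟨k, d⟩⟩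
  have := hS.apply_qneg_qneg (p, a) (!k, d)
  rw [gradedFlip_mul_apply, mul_gradedFlip_apply]
  simp only [leftLeg_apply, rightLeg_apply]
  simp only [qneg, Bool.not_not] at this
  cases p <;> cases l <;> cases q <;> cases k <;>
    simp only [qneg, qpar, kdq_mk, Bool.not_true, Bool.not_false] at * <;> simp [this, pow_add]

theorem rightLeg_mul_gradedFlip (hS : IsQueerMatrix S) (r : ℕ) :
    rightLeg S * gradedFlip n A r = gradedFlip n A (r + 1) * leftLeg S := by
  ext ⟨⟨p, a⟩, ⟨l, b⟩⟩ ⟨⟨q, c⟩, ⟨k, d⟩⟩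
  have := hS.apply_qneg_qneg (!l, b) (q, c)
  rw [gradedFlip_mul_apply, mul_gradedFlip_apply]
  simp only [leftLeg_apply, rightLeg_apply]
  simp only [qneg, Bool.not_not] at this
  cases p <;> cases l <;> cases q <;> cases k <;>
    simp only [qneg, qpar, kdq_mk, Bool.not_true, Bool.not_false] at * <;> simp [this, pow_add]

theorem lie_leftLeg_rightLeg_pow (hS : IsQueerMatrix S) (r : ℕ) :
    ⁅leftLeg S, rightLeg (S ^ r)⁆ = ⁅gradedFlip n A r, leftLeg S ^ r⁆ := by
  rw [map_pow]
  exact lie_pow_eq_of_twisted hS.gradedFlip_mul_rightLeg hS.rightLeg_mul_gradedFlip hS.bracket r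

theorem lie_leftLeg_pow_sub_lie_leftLeg_pow (hS : IsQueerMatrix S) (m r : ℕ) :
    ⁅leftLeg (S ^ (m + 2)), rightLeg (S ^ r)⁆ - ⁅leftLeg (S ^ m), rightLeg (S ^ (r + 2))⁆ =
      leftLeg (S ^ m) * gradedFlip n A r * leftLeg (S ^ (r + 1)) +
        leftLeg (S ^ (m + 1)) * gradedFlip n A r * leftLeg (S ^ r) -
        leftLeg (S ^ r) * gradedFlip n A r * leftLeg (S ^ (m + 1)) -
        leftLeg (S ^ (r + 1)) * gradedFlip n A r * leftLeg (S ^ m) := by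
  have h := hS.lie_leftLeg_rightLeg_pow (r + 2)
  rw [gradedFlip_add_two] at h
  simp only [map_pow (leftLeg (n := n) (A := A))]
  exact lie_pow_sub_lie_pow (hS.lie_leftLeg_rightLeg_pow r) h m

theorem pow_yangian_quad (hS : IsQueerMatrix S) (m r : ℕ) (i j k l : QIdx n) :
    (-1 : ℂ) ^ (qpar i * qpar k + qpar i * qpar l + qpar k * qpar l) •
        ((S ^ (m + 2)) j i * (S ^ r) l k -
            (-1 : ℂ) ^ ((qpar i + qpar j) * (qpar k + qpar l)) •
              ((S ^ r) l k * (S ^ (m + 2)) j i) -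
          ((S ^ m) j i * (S ^ (r + 2)) l k -
            (-1 : ℂ) ^ ((qpar i + qpar j) * (qpar k + qpar l)) •
              ((S ^ (r + 2)) l k * (S ^ m) j i))) =
      (S ^ (m + 1)) j k * (S ^ r) l i + (S ^ m) j k * (S ^ (r + 1)) l i -
        (S ^ r) j k * (S ^ (m + 1)) l i - (S ^ (r + 1)) j k * (S ^ m) l i +
        (-1 : ℂ) ^ (qpar k + qpar l) •
          (-((S ^ (m + 1)) j (qneg k) * (S ^ r) l (qneg i)) +
            (S ^ m) j (qneg k) * (S ^ (r + 1)) l (qneg i) +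
            (S ^ r) (qneg j) k * (S ^ (m + 1)) (qneg l) i -
            (S ^ (r + 1)) (qneg j) k * (S ^ m) (qneg l) i) := by
  have entry := congr_fun₂ (hS.lie_leftLeg_pow_sub_lie_leftLeg_pow m r) (j, l) (i, k)
  simp only [Matrix.sub_apply, Matrix.add_apply, lie_leftLeg_rightLeg_apply,
    leftLeg_mul_gradedFlip_mul_leftLeg_apply] at entry
  have hl (c : ℕ) : (S ^ c) (qneg l) i = (-1 : ℂ) ^ c • (S ^ c) l (qneg i) := by
    rw [← hS.pow_apply_qneg_qneg, qneg_qneg]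
  have hj (c : ℕ) : (S ^ c) j (qneg k) = (-1 : ℂ) ^ c • (S ^ c) (qneg j) k := by
    rw [← hS.pow_apply_qneg_qneg, qneg_qneg]
  rw [hl r, hl (r + 1), hj r, hj (r + 1)] at entry
  linear_combination (norm := skip) (-1 : ℂ) ^ (qpar k * qpar l) • entry
  obtain ⟨i, i'⟩ := i
  obtain ⟨j, j'⟩ := j
  obtain ⟨k, k'⟩ := k
  obtain ⟨l, l'⟩ := l
  rcases neg_one_pow_eq_or ℂ r with hr | hr <;>
    cases i <;> cases j <;> cases k <;> cases l <;>
    simp only [qpar_true, qpar_false, qneg, pow_add (-1 : ℂ), hr, Bool.not_true, Bool.not_false,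
      mul_zero, zero_mul, mul_one, add_zero, zero_add, pow_zero, pow_one, smul_mul_assoc,
      mul_smul_comm] <;>
    module

end IsQueerMatrix

/-- The homomorphism from the free algebra on the Yangian generators that sends `T^{(m)}_{i,j}` to
the `(j, i)` entry of `S ^ m`. -/
def freePowHom (S : Matrix (QIdx n) (QIdx n) A) : FreeAlgebra ℂ (YGen n) →ₐ[ℂ] A :=
  FreeAlgebra.lift ℂ fun | .T m i j => (S ^ (m + 1)) j i

theorem freePowHom_Tf (S : Matrix (QIdx n) (QIdx n) A) (m : ℕ) (i j : QIdx n) :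
    freePowHom S (Tf m i j) = (S ^ m) j i := by
  cases m with
  | zero =>
    rw [Tf, AlgHom.commutes, pow_zero, Matrix.one_apply, kdq]
    simp [eq_comm, apply_ite (algebraMap ℂ A)]
  | succ m => rw [Tf, freePowHom, FreeAlgebra.lift_ι_apply]

namespace IsQueerMatrix

variable {S : Matrix (QIdx n) (QIdx n) A}

/-- The homomorphism from the super-Yangian attached to a queer matrix `S`, sending `T^{(m)}_{i,j}`
to the `(j, i)` entry of `S ^ m`. -/
def powHom (hS : IsQueerMatrix S) : YQ n →ₐ[ℂ] A :=
  RingQuot.liftAlgHom ℂ ⟨freePowHom S, by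
    rintro _ _ (⟨m, r, i, j, k, l⟩ | ⟨m, i, j⟩)
    · simpa only [ybr, map_smul, map_sub, map_add, map_neg, map_mul, freePowHom_Tf]
        using hS.pow_yangian_quad m r i j k l
    · rw [map_smul, freePowHom_Tf, freePowHom_Tf, hS.pow_apply_qneg_qneg]⟩

theorem powHom_TY (hS : IsQueerMatrix S) (m : ℕ) (i j : QIdx n) :
    hS.powHom (TY m i j) = (S ^ m) j i := by
  rw [powHom, TY, RingQuot.liftAlgHom_mkAlgHom_apply, freePowHom_Tf]

end IsQueerMatrix

end SignedIndices

section QueerEnveloping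

variable {n : ℕ}

/-- The generator `e_{i,j}` or `f_{i,j}` of `U(Q(n))`, according to its parity `a`. -/
def Ugen (a : Bool) (i j : Fin n) : UQ n :=
  if a then Uf i j else Ue i j

theorem Ugen_supercommutator (a b : Bool) (i j k l : Fin n) :
    Ugen a i j * Ugen b k l - (if a && b then -1 else 1 : ℂ) • (Ugen b k l * Ugen a i j) =
      kd j k • Ugen (xor a b) i l -
        (if a && b then -1 else 1 : ℂ) • kd l i • Ugen (xor a b) k j := by
  have ee := RingQuot.mkAlgHom_rel ℂ (QRel.ee i j k l)
  have ef := RingQuot.mkAlgHom_rel ℂ (QRel.ef i j k l)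
  have fe := RingQuot.mkAlgHom_rel ℂ (QRel.ef k l i j)
  have ff := RingQuot.mkAlgHom_rel ℂ (QRel.ff i j k l)
  simp only [map_sub, map_add, map_mul, map_smul] at ee ef fe ff
  cases a <;> cases b <;>
    simp only [Ugen, Ue, Uf, Bool.xor_false, Bool.xor_true, Bool.not_true, Bool.not_false,
      Bool.and_true, Bool.and_false, ↓reduceIte, Bool.false_eq_true]
  · linear_combination (norm := module) ee
  · linear_combination (norm := module) ef
  · linear_combination (norm := module) -fe
  · linear_combination (norm := module) ff

/-- The generators of `U(Q(n))` as a matrix, in block form `-[[e, f], [-f, -e]]` with respect to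
positive and negative indices. -/
def queerGenMatrix (n : ℕ) : Matrix (QIdx n) (QIdx n) (UQ n) :=
  .of fun p q => (if p.1 then 1 else -1 : ℂ) • Ugen (xor p.1 q.1) p.2 q.2

theorem isQueerMatrix_queerGenMatrix (n : ℕ) : IsQueerMatrix (queerGenMatrix n) where
  apply_qneg_qneg := by
    rintro ⟨_ | _, i⟩ ⟨_ | _, j⟩ <;>
      simp only [queerGenMatrix, qneg, Matrix.of_apply, Bool.not_true, Bool.not_false,
        Bool.xor_false, Bool.xor_true, ↓reduceIte, Bool.false_eq_true] <;>
      module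
  bracket := by
    ext ⟨⟨p, i⟩, ⟨l, j⟩⟩ ⟨⟨q, i'⟩, ⟨k, j'⟩⟩
    have supercomm := Ugen_supercommutator (xor p q) (xor l k) i i' j j'
    rw [kd_comm i' j, kd_comm j' i] at supercomm
    rw [lie_leftLeg_rightLeg_apply, Ring.lie_def, Matrix.sub_apply, gradedFlip_mul_apply,
      mul_gradedFlip_apply]
    simp only [leftLeg_apply, queerGenMatrix, Matrix.of_apply]
    let sign : ℂ := (-1) ^ (qpar (q, i) * (qpar (l, i) + qpar (k, i)) + qpar (p, i) + qpar (l, i))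
    linear_combination (norm := skip) sign • supercomm
    cases p <;> cases q <;> cases l <;> cases k <;>
      simp only [sign, qpar_true, qpar_false, qneg, kdq_mk, Bool.xor_false, Bool.xor_true,
        Bool.not_true, Bool.not_false, Bool.and_true, Bool.and_false, ↓reduceIte, reduceCtorEq,
        smul_mul_assoc, mul_smul_comm] <;>
      module

theorem queerGenMatrix_mul_apply (M : Matrix (QIdx n) (QIdx n) (UQ n)) (i : Fin n) (b : QIdx n) :
    (queerGenMatrix n * M) (false, i) b =
      -(∑ k, Ue i k * M (false, k) b + ∑ k, Uf i k * M (true, k) b) := by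
  rw [Matrix.mul_apply, Fintype.sum_prod_type, Fintype.sum_bool, add_comm]
  simp only [queerGenMatrix, Ugen, Matrix.of_apply, Bool.xor_false, Bool.xor_true, Bool.not_false,
    ↓reduceIte, reduceCtorEq, smul_mul_assoc, ← Finset.smul_sum]
  module

theorem eU_succ (m : ℕ) (i j : Fin n) :
    eU (m + 1) i j = ∑ k, Ue i k * eU m k j + (-1 : ℂ) ^ m • ∑ k, Uf i k * fU m k j :=
  rfl

theorem fU_succ (m : ℕ) (i j : Fin n) :
    fU (m + 1) i j = ∑ k, Ue i k * fU m k j + (-1 : ℂ) ^ m • ∑ k, Uf i k * eU m k j :=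
  rfl

theorem queerGenMatrix_pow_apply (r : ℕ) (i j : Fin n) :
    (queerGenMatrix n ^ r) (false, i) (false, j) = (-1 : ℂ) ^ r • eU r i j ∧
      (queerGenMatrix n ^ r) (false, i) (true, j) = (-1 : ℂ) ^ r • fU r i j := by
  induction r generalizing i j with
  | zero => simp [eU, fU, efU, Matrix.one_apply, kd, apply_ite (algebraMap ℂ (UQ n))]
  | succ r ih =>
    have hneg (b : Bool) (k : Fin n) : (queerGenMatrix n ^ r) (true, k) (b, j) =
        (-1 : ℂ) ^ r • (queerGenMatrix n ^ r) (false, k) (!b, j) := by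
      cases b
      · exact (isQueerMatrix_queerGenMatrix n).pow_apply_qneg_qneg r (false, k) (true, j)
      · exact (isQueerMatrix_queerGenMatrix n).pow_apply_qneg_qneg r (false, k) (false, j)
    simp only [pow_succ' (queerGenMatrix n), queerGenMatrix_mul_apply, hneg, Bool.not_false,
      Bool.not_true, ih, mul_smul_comm, ← Finset.smul_sum, eU_succ, fU_succ, pow_succ (-1 : ℂ)]
    constructor <;> module

end QueerEnveloping

/-- There exists an algebra homomorphism `U : Y(Q(n)) → U(Q(n))`
determined on generators by `U(T^{(r)}_{i,j}) = (-1)^r e^{(r)}_{j,i}` and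
`U(T^{(r)}_{-i,j}) = (-1)^r f^{(r)}_{j,i}` for `i, j > 0` and `r > 0`, and
`U(T^{(0)}_{i,j}) = δ_{ij}` (values on the remaining generators being forced by
`T^{(m)}_{-i,-j} = (-1)^m T^{(m)}_{i,j}`). -/
theorem statement1 (n : ℕ) :
    ∃ U : YQ n →ₐ[ℂ] UQ n,
      (∀ i j : QIdx n, U (TY 0 i j) = algebraMap ℂ (UQ n) (kdq i j)) ∧
      (∀ (r : ℕ) (i j : Fin n),
        U (TY (r + 1) (false, i) (false, j)) = ((-1 : ℂ) ^ (r + 1)) • eU (r + 1) j i) ∧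
      (∀ (r : ℕ) (i j : Fin n),
        U (TY (r + 1) (true, i) (false, j)) = ((-1 : ℂ) ^ (r + 1)) • fU (r + 1) j i) := by
  refine ⟨(isQueerMatrix_queerGenMatrix n).powHom, fun i j => ?_, fun r i j => ?_, fun r i j => ?_⟩
  · rw [TY, Tf, AlgHom.commutes, AlgHom.commutes]
  · rw [IsQueerMatrix.powHom_TY, (queerGenMatrix_pow_apply (r + 1) j i).1]
  · rw [IsQueerMatrix.powHom_TY, (queerGenMatrix_pow_apply (r + 1) j i).2]
end
end

section
/- Let l divide n. The elements π(e_{lp, l(q−1)+1}^{(l+k−1)}) and π(f_{lp, l(q−1)+1}^{(l+k−1)}), for 1 ≤ p,q ≤ n/l and 1 ≤ k ≤ l, lie in the finite W-algebra W_χ and generate W_χ as an algebra. -/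
noncomputable section
open scoped Classical

/-!
Filter `U(Q(n))` by a shifted Kazhdan weight: a generator in row position `a` and column position
`b` of its blocks has offset `o = b - a`, and weight `2o + 1` if `o ≥ 0` and `2o + 2` if `o < 0`.
A supercommutator loses weight at least one, and words of negative weight lie in `I_χ`.

Modulo `I_χ` and lower weight, each of Sergeev's elements `e^{(l+k)}` and `f^{(l+k)}` between a
last row and a first column is, up to sign, the generator of offset `k` in the last column plus a
combination of generators of offset `k` from the other columns (the inner ones). Hence
`U(Q(n))/I_χ` is spanned by the monomials in inner generators and Sergeev elements.

The supercommutator of a Sergeev element of this kind with `m` vanishes identically, so it gives a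
Whittaker vector. For an inner generator `x`, a telescoping sum `∂_x` of elements `a - χ(a)` with
`a ∈ m` acts as the partial derivative in `x` modulo lower weight. The Euler operator
`E = ∑ x ∂_x` therefore multiplies a monomial with `s` inner generators by `s` modulo lower weight,
while it kills Whittaker vectors. So the leading part of a Whittaker vector involves no inner
generator; subtract it and induct on the weight.
-/

/-- A letter of the alphabet of `U(Q(ι))`: the matrix unit `e_{row,col}` when `odd = false`, and
`f_{row,col}` when `odd = true`. -/
@[ext]
structure Letter (ι : Type*) where
  odd : Bool
  row : ι
  col : ι

/-- The sign `(-1)^{αβ}` picked up when elements of parities `α` and `β` are exchanged. -/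
def koszulSign (α β : Bool) : ℂ := if α && β then -1 else 1

/-- The sign `(-1)^{M·β}` of the recursion for Sergeev's elements. -/
def powSign (M : ℕ) (β : Bool) : ℂ := if β then (-1) ^ M else 1

theorem koszulSign_mul_self (α β : Bool) : koszulSign α β * koszulSign α β = 1 := by
  cases α <;> cases β <;> simp [koszulSign]

theorem koszulSign_xor_right (α β δ : Bool) :
    koszulSign α (β ^^ δ) = koszulSign α β * koszulSign α δ := by
  cases α <;> cases β <;> cases δ <;> simp [koszulSign]

theorem koszulSign_xor_left (α β δ : Bool) :
    koszulSign (α ^^ β) δ = koszulSign α δ * koszulSign β δ := by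
  cases α <;> cases β <;> cases δ <;> simp [koszulSign]

@[simp]
theorem koszulSign_false_right (α : Bool) : koszulSign α false = 1 := by simp [koszulSign]

@[simp]
theorem koszulSign_false_left (α : Bool) : koszulSign false α = 1 := by simp [koszulSign]

@[simp]
theorem powSign_false (M : ℕ) : powSign M false = 1 := by simp [powSign]

theorem powSign_mul_self (M : ℕ) (β : Bool) : powSign M β * powSign M β = 1 := by
  cases β <;> simp [powSign, ← mul_pow]

section SuperCommutator

variable {A : Type*} [Ring A] [Algebra ℂ A]

/-- The supercommutator `x y - (-1)^{αβ} y x` of elements `x` of parity `α` and `y` of parity `β`.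
The parities are arguments, so no grading of `A` has to be chosen. -/
def superComm (α β : Bool) : A →ₗ[ℂ] A →ₗ[ℂ] A :=
  LinearMap.mul ℂ A - koszulSign α β • (LinearMap.mul ℂ A).flip

theorem superComm_apply (α β : Bool) (x y : A) :
    superComm α β x y = x * y - koszulSign α β • (y * x) := rfl

theorem superComm_one_right (α : Bool) (x : A) : superComm α false x 1 = 0 := by
  simp [superComm_apply]

theorem superComm_one_left (β : Bool) (y : A) : superComm false β 1 y = 0 := by
  simp [superComm_apply]

theorem superComm_mul_right (α β δ : Bool) (x y z : A) :
    superComm α (β ^^ δ) x (y * z) =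
      superComm α β x y * z + koszulSign α β • (y * superComm α δ x z) := by
  simp only [superComm_apply, koszulSign_xor_right, sub_mul, mul_sub, smul_mul_assoc,
    mul_smul_comm, smul_sub, smul_smul, mul_assoc]
  abel

theorem superComm_mul_left (α β δ : Bool) (x y z : A) :
    superComm (α ^^ β) δ (x * y) z =
      x * superComm β δ y z + koszulSign β δ • (superComm α δ x z * y) := by
  simp only [superComm_apply, koszulSign_xor_left, sub_mul, mul_sub, smul_mul_assoc,
    mul_smul_comm, smul_sub, smul_smul, mul_assoc, mul_comm (koszulSign β δ)]
  abel

theorem mul_eq_superComm_add (α β : Bool) (x y : A) :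
    x * y = superComm α β x y + koszulSign α β • (y * x) := by
  rw [superComm_apply, sub_add_cancel]

end SuperCommutator

section Words

variable {ι A : Type*} [Ring A] (γ : Letter ι → A)

/-- The product in `A` of the letters of a word. -/
def wordProd (ds : List (Letter ι)) : A := (ds.map γ).prod

/-- The parity of a word, i.e. the sum of the parities of its letters. -/
def wordParity (ds : List (Letter ι)) : Bool := (ds.map Letter.odd).foldr xor false

@[simp]
theorem wordProd_nil : wordProd γ [] = 1 := by simp [wordProd]

@[simp]
theorem wordProd_cons (d : Letter ι) (ds : List (Letter ι)) :
    wordProd γ (d :: ds) = γ d * wordProd γ ds := by simp [wordProd]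

theorem wordProd_append (ds es : List (Letter ι)) :
    wordProd γ (ds ++ es) = wordProd γ ds * wordProd γ es := by simp [wordProd]

@[simp]
theorem wordParity_nil : wordParity ([] : List (Letter ι)) = false := rfl

@[simp]
theorem wordParity_cons (d : Letter ι) (ds : List (Letter ι)) :
    wordParity (d :: ds) = (d.odd ^^ wordParity ds) := rfl

@[simp]
theorem wordParity_append (ds es : List (Letter ι)) :
    wordParity (ds ++ es) = (wordParity ds ^^ wordParity es) := by
  induction ds with
  | nil => simp
  | cons d ds ih => simp [ih]

variable [Algebra ℂ A]

/-- The span of the products of the words in `S`. -/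
def wordSpan (S : Set (List (Letter ι))) : Submodule ℂ A := Submodule.span ℂ (wordProd γ '' S)

variable {γ}

theorem wordProd_mem_wordSpan {S : Set (List (Letter ι))} {ds : List (Letter ι)} (h : ds ∈ S) :
    wordProd γ ds ∈ wordSpan γ S :=
  Submodule.subset_span (Set.mem_image_of_mem _ h)

theorem wordSpan_mono {S T : Set (List (Letter ι))} (h : S ⊆ T) : wordSpan γ S ≤ wordSpan γ T :=
  Submodule.span_mono (Set.image_mono h)

theorem wordSpan_le {S : Set (List (Letter ι))} {N : Submodule ℂ A} :
    wordSpan γ S ≤ N ↔ ∀ ds ∈ S, wordProd γ ds ∈ N :=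
  Submodule.span_le.trans Set.image_subset_iff

theorem mul_mem_wordSpan {S T R : Set (List (Letter ι))} (h : ∀ ds ∈ S, ∀ es ∈ T, ds ++ es ∈ R)
    {x y : A} (hx : x ∈ wordSpan γ S) (hy : y ∈ wordSpan γ T) : x * y ∈ wordSpan γ R := by
  refine LinearMap.BilinMap.apply_apply_mem_of_mem_span _ _ _ (LinearMap.mul ℂ A) ?_ x y hx hy
  rintro _ ⟨ds, hds, rfl⟩ _ ⟨es, hes, rfl⟩
  rw [LinearMap.mul_apply', ← wordProd_append]
  exact wordProd_mem_wordSpan (h ds hds es hes)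

theorem wordSpan_univ_eq_top (hγ : Algebra.adjoin ℂ (Set.range γ) = ⊤) :
    wordSpan γ Set.univ = ⊤ := by
  refine eq_top_iff.2 fun y _ => ?_
  have hy : y ∈ Algebra.adjoin ℂ (Set.range γ) := hγ ▸ Algebra.mem_top
  induction hy using Algebra.adjoin_induction with
  | mem x hx =>
    obtain ⟨d, rfl⟩ := hx
    simpa using wordProd_mem_wordSpan (γ := γ) (Set.mem_univ [d])
  | algebraMap r =>
    rw [Algebra.algebraMap_eq_smul_one, ← wordProd_nil γ]
    exact Submodule.smul_mem _ _ (wordProd_mem_wordSpan (Set.mem_univ _))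
  | add x y _ _ hx hy => exact add_mem (hx trivial) (hy trivial)
  | mul x y _ _ hx hy => exact mul_mem_wordSpan (by simp) (hx trivial) (hy trivial)

end Words

section QueerFamily

variable {ι A : Type*} [DecidableEq ι] [Ring A] [Algebra ℂ A]

/-- The family `γ` satisfies the defining relations of the queer Lie superalgebra `Q(ι)`, the
three of them being merged into one supercommutator. -/
def IsQueerFamily (γ : Letter ι → A) : Prop :=
  ∀ d e : Letter ι, superComm d.odd e.odd (γ d) (γ e) =
    (if d.col = e.row then γ ⟨d.odd ^^ e.odd, d.row, e.col⟩ else 0) -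
      koszulSign d.odd e.odd • (if e.col = d.row then γ ⟨d.odd ^^ e.odd, e.row, d.col⟩ else 0)

/-- Sergeev's elements `e^{(M)}` (for `a = false`) and `f^{(M)}` (for `a = true`) of a family of
letters. -/
def sergeev [Fintype ι] (γ : Letter ι → A) : ℕ → Bool → ι → ι → A
  | 0, a, i, j => if a = false ∧ i = j then 1 else 0
  | M + 1, a, i, j => ∑ b, powSign M b • ∑ t, γ ⟨b, i, t⟩ * sergeev γ M (b ^^ a) t j

variable {γ : Letter ι → A}

theorem IsQueerFamily.superComm_sum_mul [Fintype ι] (hγ : IsQueerFamily γ) (d : Letter ι)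
    (b c : Bool) (k : ι) (y : ι → A) :
    superComm d.odd (b ^^ c) (γ d) (∑ t, γ ⟨b, k, t⟩ * y t) =
      (if d.col = k then ∑ t, γ ⟨d.odd ^^ b, d.row, t⟩ * y t else 0) -
        koszulSign d.odd b • (γ ⟨d.odd ^^ b, k, d.col⟩ * y d.row) +
        koszulSign d.odd b • ∑ t, γ ⟨b, k, t⟩ * superComm d.odd c (γ d) (y t) := by
  have bracket (t : ι) := hγ d ⟨b, k, t⟩
  simp only [map_sum, superComm_mul_right, bracket, sub_mul, ite_mul, zero_mul, smul_mul_assoc,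
    Finset.sum_add_distrib, Finset.sum_sub_distrib, ← Finset.smul_sum, Finset.sum_ite_irrel,
    Finset.sum_const_zero, Finset.sum_ite_eq', Finset.mem_univ, if_true]

theorem IsQueerFamily.superComm_sergeev [Fintype ι] (hγ : IsQueerFamily γ) (M : ℕ)
    (d : Letter ι) (a : Bool) (k m : ι) :
    superComm d.odd a (γ d) (sergeev γ M a k m) =
      (if d.col = k then powSign (M + 1) d.odd • sergeev γ M (d.odd ^^ a) d.row m else 0) -
        koszulSign d.odd a • (if m = d.row then sergeev γ M (d.odd ^^ a) k d.col else 0) := by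
  obtain ⟨β, i, j⟩ := d
  induction M generalizing a k m with
  | zero =>
    by_cases h : a = false ∧ k = m
    · obtain ⟨rfl, rfl⟩ := h
      cases β <;> simp [sergeev, superComm_one_right, eq_comm, ← ite_and, and_comm]
    · have h₀ : sergeev γ 0 a k m = 0 := if_neg h
      rw [h₀, map_zero]
      cases a <;> cases β <;> simp_all [sergeev, powSign, koszulSign] <;> grind
  | succ M ih =>
    have summand (b : Bool) :
        superComm β a (γ ⟨β, i, j⟩) (∑ t, γ ⟨b, k, t⟩ * sergeev γ M (b ^^ a) t m) =
          (if j = k then ∑ t, γ ⟨β ^^ b, i, t⟩ * sergeev γ M (b ^^ a) t m else 0)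
          - koszulSign β b • (γ ⟨β ^^ b, k, j⟩ * sergeev γ M (b ^^ a) i m)
          + (koszulSign β b * powSign (M + 1) β) •
              (γ ⟨b, k, j⟩ * sergeev γ M (β ^^ (b ^^ a)) i m)
          - (if m = i then koszulSign β a •
              ∑ t, γ ⟨b, k, t⟩ * sergeev γ M (β ^^ (b ^^ a)) t j else 0) := by
      have hsign : koszulSign β b * koszulSign β (b ^^ a) = koszulSign β a := by
        rw [koszulSign_xor_right, ← mul_assoc, koszulSign_mul_self, one_mul]
      have hleib := hγ.superComm_sum_mul ⟨β, i, j⟩ b (b ^^ a) k (sergeev γ M (b ^^ a) · m)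
      simp only [← Bool.xor_assoc b b a, Bool.xor_self, Bool.false_xor] at hleib
      rw [hleib, ← hsign]
      simp only [ih, mul_sub, mul_ite, mul_zero, smul_ite, smul_zero, mul_smul_comm,
        Finset.sum_sub_distrib, Finset.sum_ite_eq, Finset.mem_univ, if_true, smul_sub, smul_smul,
        Finset.sum_ite_irrel, Finset.sum_const_zero, Finset.smul_sum]
      abel
    simp only [sergeev, map_add, map_smul, Fintype.sum_bool, summand]
    rcases neg_one_pow_eq_or ℂ M with h | h <;> cases β <;> cases a <;> split_ifs <;>
      simp [powSign, koszulSign, pow_succ, h] <;> abel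

end QueerFamily

section Weight

variable {κ : Type*} {l : ℕ}

namespace Letter

/-- The number of positions by which a letter moves to the right inside the blocks: `κ × Fin l` is
the index set of `κ` blocks of size `l`, an index being a block together with a position in it. -/
def offset (d : Letter (κ × Fin l)) : ℤ := (d.col.2 : ℤ) - d.row.2

/-- The weight of a letter for the Kazhdan-type filtration. It is positive on the parabolic
(`0 ≤ offset`), and among the lower letters it vanishes only for `offset = -1`. -/
def weight (d : Letter (κ × Fin l)) : ℤ :=
  if 0 ≤ d.offset then 2 * d.offset + 1 else 2 * d.offset + 2

/-- The value at a letter of the character `χ`, extended by zero outside the lower letters. -/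
def character [DecidableEq κ] (d : Letter (κ × Fin l)) : ℂ :=
  if d.odd = false ∧ d.row.1 = d.col.1 ∧ (d.row.2 : ℕ) = d.col.2 + 1 then 1 else 0

theorem weight_of_nonneg {d : Letter (κ × Fin l)} (h : 0 ≤ d.offset) :
    d.weight = 2 * d.offset + 1 := if_pos h

theorem weight_of_neg {d : Letter (κ × Fin l)} (h : d.offset < 0) :
    d.weight = 2 * d.offset + 2 := if_neg h.not_ge

theorem weight_pos {d : Letter (κ × Fin l)} (h : 0 ≤ d.offset) : 0 < d.weight := by
  rw [weight_of_nonneg h]; omega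

theorem weight_comp_le {d e : Letter (κ × Fin l)} (h : d.col = e.row) (α : Bool) :
    weight ⟨α, d.row, e.col⟩ ≤ d.weight + e.weight - 1 := by
  simp only [weight, offset, h]
  split_ifs <;> omega

variable [DecidableEq κ]

theorem character_of_weight_ne_zero {d : Letter (κ × Fin l)} (h : d.weight ≠ 0) :
    d.character = 0 := by
  refine if_neg fun ⟨_, _, hrow⟩ => h ?_
  have hoff : d.offset = -1 := by rw [offset, hrow]; push_cast; ring
  rw [weight_of_neg (by omega), hoff]; norm_num

theorem koszulSign_mul_character (d : Letter (κ × Fin l)) (α : Bool) :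
    koszulSign d.odd α * d.character = d.character := by
  unfold character
  split_ifs with h
  · rw [h.1, koszulSign_false_left, one_mul]
  · rw [mul_zero]

end Letter

/-- The sum of the weights of the letters of a word. -/
def wordWeight (ds : List (Letter (κ × Fin l))) : ℤ := (ds.map Letter.weight).sum

@[simp]
theorem wordWeight_nil : wordWeight ([] : List (Letter (κ × Fin l))) = 0 := rfl

@[simp]
theorem wordWeight_cons (d : Letter (κ × Fin l)) (ds : List (Letter (κ × Fin l))) :
    wordWeight (d :: ds) = d.weight + wordWeight ds := by simp [wordWeight]

@[simp]
theorem wordWeight_append (ds es : List (Letter (κ × Fin l))) :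
    wordWeight (ds ++ es) = wordWeight ds + wordWeight es := by simp [wordWeight]

end Weight

section Filtration

variable {κ A : Type*} {l : ℕ} [Ring A] [Algebra ℂ A] (γ : Letter (κ × Fin l) → A)

/-- The Kazhdan-type filtration: the span of the words of weight at most `w`. -/
def weightFiltration (w : ℤ) : Submodule ℂ A := wordSpan γ {ds | wordWeight ds ≤ w}

/-- The part of parity `α` of the filtration. -/
def parityFiltration (w : ℤ) (α : Bool) : Submodule ℂ A :=
  wordSpan γ {ds | wordWeight ds ≤ w ∧ wordParity ds = α}

variable {γ} {w w' : ℤ} {α β : Bool}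

theorem weightFiltration_mono (h : w ≤ w') : weightFiltration γ w ≤ weightFiltration γ w' :=
  wordSpan_mono fun _ hds => le_trans hds h

theorem parityFiltration_mono (h : w ≤ w') (α : Bool) :
    parityFiltration γ w α ≤ parityFiltration γ w' α :=
  wordSpan_mono fun _ hds => ⟨hds.1.trans h, hds.2⟩

theorem parityFiltration_le_weightFiltration (w : ℤ) (α : Bool) :
    parityFiltration γ w α ≤ weightFiltration γ w :=
  wordSpan_mono fun _ hds => hds.1

theorem wordProd_mem_parityFiltration (ds : List (Letter (κ × Fin l))) :
    wordProd γ ds ∈ parityFiltration γ (wordWeight ds) (wordParity ds) :=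
  wordProd_mem_wordSpan ⟨le_rfl, rfl⟩

theorem letter_mem_parityFiltration (d : Letter (κ × Fin l)) :
    γ d ∈ parityFiltration γ d.weight d.odd := by
  simpa using wordProd_mem_parityFiltration (γ := γ) [d]

theorem one_mem_parityFiltration : (1 : A) ∈ parityFiltration γ 0 false := by
  simpa using wordProd_mem_parityFiltration (γ := γ) []

theorem mul_mem_weightFiltration {x y : A} (hx : x ∈ weightFiltration γ w)
    (hy : y ∈ weightFiltration γ w') : x * y ∈ weightFiltration γ (w + w') :=
  mul_mem_wordSpan (fun ds hds es hes => by
    simpa using add_le_add (Set.mem_ofPred.1 hds) (Set.mem_ofPred.1 hes)) hx hy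

theorem mul_mem_parityFiltration {x y : A} (hx : x ∈ parityFiltration γ w α)
    (hy : y ∈ parityFiltration γ w' β) : x * y ∈ parityFiltration γ (w + w') (α ^^ β) :=
  mul_mem_wordSpan (fun ds hds es hes => by
    simpa [hds.2, hes.2] using add_le_add hds.1 hes.1) hx hy

theorem exists_mem_weightFiltration (hγ : Algebra.adjoin ℂ (Set.range γ) = ⊤) (y : A) :
    ∃ N : ℕ, y ∈ weightFiltration γ N := by
  have hy : y ∈ wordSpan γ Set.univ := wordSpan_univ_eq_top hγ ▸ Submodule.mem_top
  induction hy using Submodule.span_induction with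
  | mem x hx =>
    obtain ⟨ds, -, rfl⟩ := hx
    exact ⟨(wordWeight ds).toNat, wordProd_mem_wordSpan (Int.self_le_toNat _)⟩
  | zero => exact ⟨0, zero_mem _⟩
  | add x y _ _ hx hy =>
    obtain ⟨M, hM⟩ := hx
    obtain ⟨N, hN⟩ := hy
    exact ⟨max M N, add_mem (weightFiltration_mono (by simp) hM)
      (weightFiltration_mono (by simp) hN)⟩
  | smul c x _ hx => exact hx.imp fun _ h => Submodule.smul_mem _ c h

variable [DecidableEq κ]

theorem IsQueerFamily.superComm_letter_wordProd_mem (hγ : IsQueerFamily γ)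
    (d : Letter (κ × Fin l)) (ds : List (Letter (κ × Fin l))) :
    superComm d.odd (wordParity ds) (γ d) (wordProd γ ds) ∈
      wordSpan γ {es | wordWeight es ≤ d.weight + wordWeight ds - 1 ∧ es.length ≤ ds.length ∧
        wordParity es = (d.odd ^^ wordParity ds)} := by
  induction ds with
  | nil => simp [superComm_one_right]
  | cons e ds ih =>
    have bracket (f : Letter (κ × Fin l)) (hodd : f.odd = (d.odd ^^ e.odd))
        (hf : f.weight ≤ d.weight + e.weight - 1) : γ f * wordProd γ ds ∈
        wordSpan γ {es | wordWeight es ≤ d.weight + wordWeight (e :: ds) - 1 ∧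
          es.length ≤ (e :: ds).length ∧ wordParity es = (d.odd ^^ wordParity (e :: ds))} := by
      rw [← wordProd_cons]
      refine wordProd_mem_wordSpan ⟨?_, le_rfl, by simp [hodd]⟩
      rw [wordWeight_cons, wordWeight_cons]; omega
    rw [wordParity_cons, wordProd_cons, superComm_mul_right, hγ, sub_mul, smul_mul_assoc]
    refine add_mem (sub_mem ?_ (Submodule.smul_mem _ _ ?_)) (Submodule.smul_mem _ _ ?_)
    · split_ifs with h
      · exact bracket _ rfl (Letter.weight_comp_le h _)
      · simp
    · split_ifs with h
      · exact bracket _ rfl (add_comm e.weight d.weight ▸ Letter.weight_comp_le h _)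
      · simp
    · refine mul_mem_wordSpan (S := {[e]}) ?_
        (by simpa using wordProd_mem_wordSpan (γ := γ) (Set.mem_singleton [e])) ih
      rintro _ rfl es ⟨hw, hlen, hpar⟩
      refine ⟨?_, by simpa using hlen, by simp [hpar, Bool.xor_left_comm]⟩
      simp only [List.singleton_append, wordWeight_cons]; omega

theorem IsQueerFamily.superComm_wordProd_mem (hγ : IsQueerFamily γ)
    (ds es : List (Letter (κ × Fin l))) :
    superComm (wordParity ds) (wordParity es) (wordProd γ ds) (wordProd γ es) ∈
      parityFiltration γ (wordWeight ds + wordWeight es - 1) (wordParity ds ^^ wordParity es) := by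
  induction ds with
  | nil => simp [superComm_one_left]
  | cons d ds ih =>
    rw [wordParity_cons, wordProd_cons, superComm_mul_left]
    refine add_mem ?_ (Submodule.smul_mem _ _ ?_)
    · have h := mul_mem_parityFiltration (letter_mem_parityFiltration d) ih
      rw [← Bool.xor_assoc] at h
      refine parityFiltration_mono ?_ _ h
      rw [wordWeight_cons]; omega
    · have hd : superComm d.odd (wordParity es) (γ d) (wordProd γ es) ∈
          parityFiltration γ (d.weight + wordWeight es - 1) (d.odd ^^ wordParity es) :=
        wordSpan_mono (Set.ofPred_subset_ofPred.2 fun _ h => ⟨h.1, h.2.2⟩)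
            (hγ.superComm_letter_wordProd_mem d es)
      have h := mul_mem_parityFiltration hd (wordProd_mem_parityFiltration ds)
      rw [Bool.xor_right_comm] at h
      refine parityFiltration_mono ?_ _ h
      rw [wordWeight_cons]; omega

theorem IsQueerFamily.superComm_mem_parityFiltration (hγ : IsQueerFamily γ) {x y : A}
    (hx : x ∈ parityFiltration γ w α) (hy : y ∈ parityFiltration γ w' β) :
    superComm α β x y ∈ parityFiltration γ (w + w' - 1) (α ^^ β) := by
  refine LinearMap.BilinMap.apply_apply_mem_of_mem_span _ _ _ _ ?_ x y hx hy
  rintro _ ⟨ds, ⟨hds, rfl⟩, rfl⟩ _ ⟨es, ⟨hes, rfl⟩, rfl⟩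
  exact parityFiltration_mono (by omega) _ (hγ.superComm_wordProd_mem ds es)

end Filtration

section Modulo

variable {κ A : Type*} {l : ℕ} [Ring A] [Algebra ℂ A] (γ : Letter (κ × Fin l) → A) (I : Ideal A)

/-- The preimage of the filtration induced on the quotient by the left ideal `I`. -/
def weightFiltrationMod (w : ℤ) : Submodule ℂ A := weightFiltration γ w ⊔ I.restrictScalars ℂ

/-- The element `a - χ(a)` attached to a letter `a`. -/
def shiftedLetter [DecidableEq κ] (d : Letter (κ × Fin l)) : A := γ d - d.character • 1

/-- The left ideal `I` contains the elements `a - χ(a)` for all letters `a` of the nilpotent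
subalgebra `m`. -/
def ContainsShifts [DecidableEq κ] : Prop := ∀ d, d.offset < 0 → shiftedLetter γ d ∈ I

variable {γ I} {w w' : ℤ}

theorem weightFiltrationMod_mono (h : w ≤ w') :
    weightFiltrationMod γ I w ≤ weightFiltrationMod γ I w' :=
  sup_le_sup_right (weightFiltration_mono h) _

theorem mem_weightFiltrationMod_of_mem_ideal {x : A} (h : x ∈ I) :
    x ∈ weightFiltrationMod γ I w :=
  Submodule.mem_sup_right h

theorem weightFiltration_le_weightFiltrationMod (w : ℤ) :
    weightFiltration γ w ≤ weightFiltrationMod γ I w :=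
  le_sup_left

theorem parityFiltration_le_weightFiltrationMod (w : ℤ) (α : Bool) :
    parityFiltration γ w α ≤ weightFiltrationMod γ I w :=
  (parityFiltration_le_weightFiltration w α).trans le_sup_left

theorem weightFiltrationMod_le {N : Submodule ℂ A}
    (hword : ∀ ds, wordWeight ds ≤ w → wordProd γ ds ∈ N) (hI : ∀ x ∈ I, x ∈ N) :
    weightFiltrationMod γ I w ≤ N :=
  sup_le (wordSpan_le.2 hword) hI

theorem mul_mem_weightFiltrationMod {x y : A} (hx : x ∈ weightFiltration γ w)
    (hy : y ∈ weightFiltrationMod γ I w') : x * y ∈ weightFiltrationMod γ I (w + w') := by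
  obtain ⟨u, hu, v, hv, rfl⟩ := Submodule.mem_sup.1 hy
  rw [mul_add]
  exact add_mem (Submodule.mem_sup_left (mul_mem_weightFiltration hx hu))
    (mem_weightFiltrationMod_of_mem_ideal (I.mul_mem_left x hv))

theorem letter_mul_mem_weightFiltrationMod {y : A} (d : Letter (κ × Fin l))
    (hy : y ∈ weightFiltrationMod γ I w) : γ d * y ∈ weightFiltrationMod γ I (d.weight + w) :=
  mul_mem_weightFiltrationMod
    (parityFiltration_le_weightFiltration _ _ (letter_mem_parityFiltration d)) hy

variable [DecidableEq κ]

theorem letter_mul_eq (d : Letter (κ × Fin l)) (y : A) :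
    γ d * y = shiftedLetter γ d * y + d.character • y := by
  rw [shiftedLetter, sub_mul, smul_mul_assoc, one_mul, sub_add_cancel]

theorem superComm_shiftedLetter (d : Letter (κ × Fin l)) (β : Bool) (y : A) :
    superComm d.odd β (shiftedLetter γ d) y = superComm d.odd β (γ d) y := by
  simp only [superComm_apply, shiftedLetter, sub_mul, mul_sub, smul_sub, smul_mul_assoc,
    mul_smul_comm, smul_smul, one_mul, mul_one, d.koszulSign_mul_character]
  abel

theorem ContainsShifts.shiftedLetter_mul_sub_mem (hI : ContainsShifts γ I)
    {d : Letter (κ × Fin l)} (hd : d.offset < 0) (β : Bool) (y : A) :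
    shiftedLetter γ d * y - superComm d.odd β (γ d) y ∈ I := by
  rw [← superComm_shiftedLetter, superComm_apply, sub_sub_cancel]
  exact I.smul_of_tower_mem _ (I.mul_mem_left y (hI d hd))

theorem IsQueerFamily.shiftedLetter_mul_mem (hγ : IsQueerFamily γ) (hI : ContainsShifts γ I)
    {d : Letter (κ × Fin l)} (hd : d.offset < 0) {x : A} (hx : x ∈ weightFiltrationMod γ I w) :
    shiftedLetter γ d * x ∈ weightFiltrationMod γ I (d.weight + w - 1) := by
  suffices weightFiltrationMod γ I w ≤ (weightFiltrationMod γ I (d.weight + w - 1)).comap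
      (LinearMap.mulLeft ℂ (shiftedLetter γ d)) from this hx
  refine weightFiltrationMod_le (fun ds hds => ?_) fun y hy =>
    mem_weightFiltrationMod_of_mem_ideal (I.mul_mem_left _ hy)
  have hcomm : superComm d.odd (wordParity ds) (γ d) (wordProd γ ds) ∈
      weightFiltration γ (d.weight + w - 1) :=
    wordSpan_mono (fun es hes => by have := hes.1; simp only [Set.mem_ofPred]; omega)
      (hγ.superComm_letter_wordProd_mem d ds)
  exact (Submodule.sub_mem_iff_left _ (Submodule.mem_sup_left hcomm)).1
    (mem_weightFiltrationMod_of_mem_ideal (hI.shiftedLetter_mul_sub_mem hd _ _))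

theorem IsQueerFamily.wordProd_mem_ideal (hγ : IsQueerFamily γ) (hI : ContainsShifts γ I)
    (ds : List (Letter (κ × Fin l))) (hds : wordWeight ds < 0) : wordProd γ ds ∈ I := by
  induction hlen : ds.length using Nat.strong_induction_on generalizing ds with
  | _ L ih =>
  subst hlen
  cases ds with
  | nil => simp at hds
  | cons d ds =>
    have ih' (es : List (Letter (κ × Fin l))) (hlen : es.length ≤ ds.length)
        (hes : wordWeight es < 0) : wordProd γ es ∈ I :=
      ih _ (Nat.lt_succ_of_le hlen) es hes rfl
    rw [wordWeight_cons] at hds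
    rw [wordProd_cons]
    rcases le_or_gt 0 d.offset with hd | hd
    · have := Letter.weight_pos hd
      exact I.mul_mem_left _ (ih' ds le_rfl (by omega))
    · have hcomm : superComm d.odd (wordParity ds) (γ d) (wordProd γ ds) ∈
          I.restrictScalars ℂ :=
        wordSpan_le.2 (fun es hes => ih' es hes.2.1 (by have := hes.1; omega))
          (hγ.superComm_letter_wordProd_mem d ds)
      have hchar : d.character • wordProd γ ds ∈ I := by
        by_cases h₀ : d.weight = 0
        · exact I.smul_of_tower_mem _ (ih' ds le_rfl (by omega))
        · simp [Letter.character_of_weight_ne_zero h₀]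
      rw [letter_mul_eq]
      exact add_mem ((Submodule.sub_mem_iff_left _ hcomm).1
        (hI.shiftedLetter_mul_sub_mem hd _ _)) hchar

theorem IsQueerFamily.weightFiltrationMod_le_ideal (hγ : IsQueerFamily γ)
    (hI : ContainsShifts γ I) (hw : w < 0) :
    weightFiltrationMod γ I w ≤ I.restrictScalars ℂ :=
  weightFiltrationMod_le (fun ds hds => hγ.wordProd_mem_ideal hI ds (by omega)) fun _ => id

theorem IsQueerFamily.mul_mem_weightFiltrationMod_of_lower (hγ : IsQueerFamily γ) {α : Bool}
    {D x : A} (hD : D ∈ parityFiltration γ w α) (hlow : D ∈ weightFiltrationMod γ I (w - 1))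
    (hx : x ∈ weightFiltrationMod γ I w') : D * x ∈ weightFiltrationMod γ I (w + w' - 1) := by
  suffices weightFiltrationMod γ I w' ≤
      (weightFiltrationMod γ I (w + w' - 1)).comap (LinearMap.mulLeft ℂ D) from this hx
  refine weightFiltrationMod_le (fun ds hds => ?_) fun y hy =>
    mem_weightFiltrationMod_of_mem_ideal (I.mul_mem_left _ hy)
  have hword := parityFiltration_mono hds _ (wordProd_mem_parityFiltration (γ := γ) ds)
  have hcomm := parityFiltration_le_weightFiltrationMod (I := I) _ _
    (hγ.superComm_mem_parityFiltration hD hword)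
  have hprod := mul_mem_weightFiltrationMod (parityFiltration_le_weightFiltration _ _ hword) hlow
  rw [Submodule.mem_comap, LinearMap.mulLeft_apply, mul_eq_superComm_add α (wordParity ds)]
  exact add_mem hcomm
    (Submodule.smul_mem _ _ (weightFiltrationMod_mono (by omega) hprod))

end Modulo

section SergeevLeadingTerm

variable {κ A : Type*} {l : ℕ} [Ring A] [Algebra ℂ A]

/-- An upper bound for the weight of Sergeev's element `e^{(M)}_{i,j}` when `j` is the first
position of a block. -/
def sergeevWeight (M : ℕ) (i : κ × Fin l) : ℤ :=
  if M ≤ i.2 then 2 * ((M : ℤ) - i.2) else 2 * ((M : ℤ) - i.2) - 1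

/-- The letters of the parabolic subalgebra that do not lie in the last column of a block. -/
def Letter.IsInner (d : Letter (κ × Fin l)) : Prop := 0 ≤ d.offset ∧ (d.col.2 : ℕ) + 1 < l

/-- The span of the inner letters of a given parity and offset. -/
def innerSpan (γ : Letter (κ × Fin l) → A) (a : Bool) (o : ℤ) : Submodule ℂ A :=
  Submodule.span ℂ (γ '' {d | d.IsInner ∧ d.odd = a ∧ d.offset = o})

variable {γ : Letter (κ × Fin l) → A} {I : Ideal A} {M : ℕ} {i j : κ × Fin l}

theorem innerSpan_le_parityFiltration (a : Bool) (o : ℤ) :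
    innerSpan γ a o ≤ parityFiltration γ (2 * o + 1) a := by
  refine Submodule.span_le.2 ?_
  rintro _ ⟨d, ⟨hd, rfl, rfl⟩, rfl⟩
  rw [← Letter.weight_of_nonneg hd.1]
  exact letter_mem_parityFiltration d

theorem weight_add_sergeevWeight_le (b : Bool) (i t : κ × Fin l) :
    Letter.weight ⟨b, i, t⟩ + sergeevWeight M t ≤ sergeevWeight (M + 1) i := by
  simp only [Letter.weight, Letter.offset, sergeevWeight]
  split_ifs <;> push_cast <;> omega

theorem exists_prev (hi : (i.2 : ℕ) ≠ 0) :
    ∃ i' : κ × Fin l, i'.1 = i.1 ∧ (i.2 : ℕ) = i'.2 + 1 :=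
  ⟨(i.1, ⟨i.2 - 1, by omega⟩), rfl, (Nat.succ_pred hi).symm⟩

variable [Fintype κ] [DecidableEq κ]

/-- The contribution of the shifted letters `a - χ(a)` to the recursion for `e^{(M+1)}_{i,j}`. -/
def sergeevRemainder (γ : Letter (κ × Fin l) → A) (M : ℕ) (a : Bool) (i j : κ × Fin l) : A :=
  ∑ b, powSign M b • ∑ t, shiftedLetter γ ⟨b, i, t⟩ * sergeev γ M (b ^^ a) t j

theorem sergeev_mem_parityFiltration (hj : (j.2 : ℕ) = 0) (M : ℕ) (a : Bool) (i : κ × Fin l) :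
    sergeev γ M a i j ∈ parityFiltration γ (sergeevWeight M i) a := by
  induction M generalizing a i with
  | zero =>
    rw [sergeev]
    split_ifs with h
    · obtain ⟨rfl, rfl⟩ := h
      simpa [sergeevWeight, hj] using one_mem_parityFiltration (γ := γ)
    · exact zero_mem _
  | succ M ih =>
    refine sum_mem fun b _ => Submodule.smul_mem _ _ (sum_mem fun t _ => ?_)
    have hmul := mul_mem_parityFiltration (letter_mem_parityFiltration ⟨b, i, t⟩) (ih (b ^^ a) t)
    rw [← Bool.xor_assoc, Bool.xor_self, Bool.false_xor] at hmul
    exact parityFiltration_mono (weight_add_sergeevWeight_le b i t) a hmul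

theorem sergeev_mem_weightFiltrationMod (hj : (j.2 : ℕ) = 0) (M : ℕ) (a : Bool)
    (i : κ × Fin l) : sergeev γ M a i j ∈ weightFiltrationMod γ I (sergeevWeight M i) :=
  parityFiltration_le_weightFiltrationMod _ a (sergeev_mem_parityFiltration hj M a i)

theorem sergeev_succ_eq_sum (M : ℕ) (a : Bool) (i j : κ × Fin l) :
    sergeev γ (M + 1) a i j = (∑ t, Letter.character ⟨false, i, t⟩ • sergeev γ M a t j) +
      sergeevRemainder γ M a i j := by
  have hsplit (b : Bool) (t : κ × Fin l) := letter_mul_eq (γ := γ) ⟨b, i, t⟩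
  have hodd (t : κ × Fin l) : Letter.character ⟨true, i, t⟩ = 0 := by simp [Letter.character]
  simp only [sergeev, sergeevRemainder, hsplit, Finset.sum_add_distrib, smul_add,
    Fintype.sum_bool, hodd, zero_smul, Finset.sum_const_zero, smul_zero, powSign_false,
    one_smul, Bool.false_xor]
  abel

theorem sergeev_succ_of_first (hi : (i.2 : ℕ) = 0) (M : ℕ) (a : Bool) (j : κ × Fin l) :
    sergeev γ (M + 1) a i j = sergeevRemainder γ M a i j := by
  simp [sergeev_succ_eq_sum, Letter.character, hi]

theorem sergeev_succ_of_succ {i' : κ × Fin l} (hblock : i'.1 = i.1)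
    (hpos : (i.2 : ℕ) = i'.2 + 1) (M : ℕ) (a : Bool) (j : κ × Fin l) :
    sergeev γ (M + 1) a i j = sergeev γ M a i' j + sergeevRemainder γ M a i j := by
  have hchar (t : κ × Fin l) : Letter.character ⟨false, i, t⟩ = if t = i' then 1 else 0 := by
    have hiff : i.1 = t.1 ∧ (i.2 : ℕ) = t.2 + 1 ↔ t = i' := by
      rw [Prod.ext_iff, Fin.ext_iff]
      refine and_congr ⟨fun h => (hblock.trans h).symm, fun h => (h.trans hblock).symm⟩ ?_
      omega
    simp [Letter.character, hiff]
  simp only [sergeev_succ_eq_sum, hchar, ite_smul, one_smul, zero_smul, Finset.sum_ite_eq',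
    Finset.mem_univ, if_true]

variable (hγ : IsQueerFamily γ) (hI : ContainsShifts γ I) (hj : (j.2 : ℕ) = 0)
include hγ hI hj

theorem sergeev_mem_ideal (hM : M < i.2) (a : Bool) : sergeev γ M a i j ∈ I := by
  refine hγ.weightFiltrationMod_le_ideal hI ?_ (sergeev_mem_weightFiltrationMod hj M a i)
  rw [sergeevWeight, if_pos hM.le]
  omega

theorem shiftedLetter_mul_sergeev_mem {t : κ × Fin l} (ht : t.2 < i.2 ∨ (t.2 : ℕ) ≠ M)
    (b c : Bool) : shiftedLetter γ ⟨b, i, t⟩ * sergeev γ M c t j ∈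
      weightFiltrationMod γ I (2 * ((M : ℤ) - i.2)) := by
  have hS := sergeev_mem_weightFiltrationMod (γ := γ) (I := I) hj M c t
  rcases lt_or_ge t.2 i.2 with hlt | hge
  · have hd : Letter.offset ⟨b, i, t⟩ < 0 := by simp only [Letter.offset]; omega
    have hmem := hγ.shiftedLetter_mul_mem hI hd hS
    have hw := Letter.weight_of_neg hd
    simp only [Letter.offset] at hw
    rw [hw, sergeevWeight] at hmem
    split_ifs at hmem
    · exact mem_weightFiltrationMod_of_mem_ideal
        (hγ.weightFiltrationMod_le_ideal hI (by omega) hmem)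
    · exact weightFiltrationMod_mono (by omega) hmem
  · rcases lt_or_gt_of_ne (ht.resolve_left hge.not_gt) with hlt | hgt
    · have hd : 0 ≤ Letter.offset ⟨b, i, t⟩ := by simp only [Letter.offset]; omega
      have hw := Letter.weight_of_nonneg hd
      have hmem := letter_mul_mem_weightFiltrationMod ⟨b, i, t⟩ hS
      rw [shiftedLetter, Letter.character_of_weight_ne_zero (Letter.weight_pos hd).ne', zero_smul,
        sub_zero]
      refine weightFiltrationMod_mono ?_ hmem
      rw [hw, sergeevWeight, if_neg hlt.not_ge]
      simp only [Letter.offset]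
      omega
    · exact mem_weightFiltrationMod_of_mem_ideal
        (I.mul_mem_left _ (sergeev_mem_ideal hγ hI hj hgt c))

theorem sergeevRemainder_mem (hM : M < i.2 ∨ l ≤ M) (a : Bool) :
    sergeevRemainder γ M a i j ∈ weightFiltrationMod γ I (2 * ((M : ℤ) - i.2)) :=
  sum_mem fun b _ => Submodule.smul_mem _ _ <| sum_mem fun t _ =>
    shiftedLetter_mul_sergeev_mem hγ hI hj (by have := t.2.isLt; omega) b (b ^^ a)

theorem sergeev_sub_one_mem_ideal (hM : (i.2 : ℕ) = M) (a : Bool) :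
    sergeev γ M a i j - (if a = false ∧ i.1 = j.1 then 1 else 0) ∈ I := by
  induction M generalizing i with
  | zero =>
    have hij : i = j ↔ i.1 = j.1 := by rw [Prod.ext_iff, Fin.ext_iff, hM, hj, and_iff_left rfl]
    simp [sergeev, hij]
  | succ M ih =>
    obtain ⟨i', hblock, hpos⟩ := exists_prev (i := i) (by omega)
    have hrem : sergeevRemainder γ M a i j ∈ I :=
      hγ.weightFiltrationMod_le_ideal hI (by omega)
        (sergeevRemainder_mem hγ hI hj (Or.inl (by omega)) a)
    rw [sergeev_succ_of_succ hblock hpos, add_sub_right_comm, ← hblock]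
    exact add_mem (ih (by omega)) hrem

theorem sergeevRemainder_sub_mem {t : κ × Fin l} (htblock : t.1 = j.1) (ht : (t.2 : ℕ) = M)
    (hM : i.2 ≤ t.2) (a : Bool) :
    sergeevRemainder γ M a i j - powSign M a • γ ⟨a, i, t⟩ ∈
      weightFiltrationMod γ I (2 * ((M : ℤ) - i.2)) := by
  have hterm (b : Bool) (u : κ × Fin l) :
      shiftedLetter γ ⟨b, i, u⟩ * sergeev γ M (b ^^ a) u j -
          (if u = t then if b = a then γ ⟨a, i, t⟩ else 0 else 0) ∈
        weightFiltrationMod γ I (2 * ((M : ℤ) - i.2)) := by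
    by_cases hu : u.2 < i.2 ∨ (u.2 : ℕ) ≠ M
    · rw [if_neg (by rintro rfl; omega), sub_zero]
      exact shiftedLetter_mul_sergeev_mem hγ hI hj hu b _
    · have huM : (u.2 : ℕ) = M := by omega
      have hut : u = t ↔ u.1 = j.1 := by
        rw [Prod.ext_iff, Fin.ext_iff, huM, ht, and_iff_left rfl, htblock]
      have hd : 0 ≤ Letter.offset ⟨b, i, u⟩ := by simp only [Letter.offset]; omega
      have hmem := I.mul_mem_left (γ ⟨b, i, u⟩)
        (sergeev_sub_one_mem_ideal hγ hI hj huM (b ^^ a))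
      refine mem_weightFiltrationMod_of_mem_ideal ?_
      rw [shiftedLetter, Letter.character_of_weight_ne_zero (Letter.weight_pos hd).ne', zero_smul,
        sub_zero]
      convert hmem using 1
      by_cases h : u = t
      · subst h
        cases a <;> cases b <;> simp [mul_sub, htblock]
      · simp [h, mt hut.2 h]
  have hlead : powSign M a • γ ⟨a, i, t⟩ = ∑ b, powSign M b • ∑ u,
      (if u = t then if b = a then γ ⟨a, i, t⟩ else 0 else 0) := by
    simp
  rw [hlead, sergeevRemainder, ← Finset.sum_sub_distrib]
  refine sum_mem fun b _ => ?_
  rw [← smul_sub, ← Finset.sum_sub_distrib]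
  exact Submodule.smul_mem _ _ (sum_mem fun u _ => hterm b u)

theorem sergeevRemainder_mem_innerSpan_sup (hM : M + 1 < l) (hi : (i.2 : ℕ) ≤ M) (a : Bool) :
    sergeevRemainder γ M a i j ∈ innerSpan γ a ((M : ℤ) - i.2) ⊔
      weightFiltrationMod γ I (2 * ((M : ℤ) - i.2)) := by
  obtain ⟨t, htblock, ht⟩ : ∃ t : κ × Fin l, t.1 = j.1 ∧ (t.2 : ℕ) = M :=
    ⟨(j.1, ⟨M, by omega⟩), rfl, rfl⟩
  have hoff : Letter.offset ⟨a, i, t⟩ = (M : ℤ) - i.2 := by simp only [Letter.offset, ht]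
  have hinner : γ ⟨a, i, t⟩ ∈ innerSpan γ a ((M : ℤ) - i.2) :=
    Submodule.subset_span ⟨_, ⟨⟨by omega, ht.symm ▸ hM⟩, rfl, hoff⟩, rfl⟩
  exact (Submodule.sub_mem_iff_left _
    (Submodule.smul_mem _ _ (Submodule.mem_sup_left hinner))).1
      (Submodule.mem_sup_right (sergeevRemainder_sub_mem hγ hI hj htblock ht (by omega) a))

theorem sergeev_mem_innerSpan_sup (hM : M + 1 < l) (hi : (i.2 : ℕ) ≤ M) (a : Bool) :
    sergeev γ (M + 1) a i j ∈ innerSpan γ a ((M : ℤ) - i.2) ⊔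
      weightFiltrationMod γ I (2 * ((M : ℤ) - i.2)) := by
  induction M generalizing i with
  | zero =>
    rw [sergeev_succ_of_first (by omega)]
    exact sergeevRemainder_mem_innerSpan_sup hγ hI hj hM hi a
  | succ M ih =>
    have hrem := sergeevRemainder_mem_innerSpan_sup hγ hI hj hM hi a
    by_cases hi₀ : (i.2 : ℕ) = 0
    · rwa [sergeev_succ_of_first hi₀]
    · obtain ⟨i', hblock, hpos⟩ := exists_prev hi₀
      have hoff : (M : ℤ) - i'.2 = ((M + 1 : ℕ) : ℤ) - i.2 := by omega
      rw [sergeev_succ_of_succ hblock hpos]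
      exact add_mem (hoff ▸ ih (by omega) (by omega)) hrem

theorem sergeev_sub_lastColumn_mem {t : κ × Fin l} (htblock : t.1 = j.1)
    (ht : (t.2 : ℕ) + 1 = l) (a : Bool) :
    sergeev γ l a i j - powSign (l - 1) a • γ ⟨a, i, t⟩ ∈
      innerSpan γ a ((l : ℤ) - 1 - i.2) ⊔ weightFiltrationMod γ I (2 * ((l : ℤ) - 1 - i.2)) := by
  obtain ⟨M, rfl⟩ : ∃ M, l = M + 1 := ⟨_, ht.symm⟩
  have hM : ((M + 1 : ℕ) : ℤ) - 1 = M := by omega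
  rw [hM, Nat.add_sub_cancel]
  have hrem := Submodule.mem_sup_right (S := innerSpan γ a ((M : ℤ) - i.2))
    (sergeevRemainder_sub_mem hγ hI hj htblock (M := M) (i := i) (by omega) (by omega) a)
  by_cases hi₀ : (i.2 : ℕ) = 0
  · rwa [sergeev_succ_of_first hi₀]
  · obtain ⟨i', hblock, hpos⟩ := exists_prev hi₀
    obtain ⟨N, rfl⟩ : ∃ N, M = N + 1 := ⟨M - 1, by omega⟩
    have hprev := sergeev_mem_innerSpan_sup hγ hI hj (M := N) (i := i') (by omega) (by omega) a
    have hoff : (N : ℤ) - i'.2 = ((N + 1 : ℕ) : ℤ) - i.2 := by omega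
    rw [sergeev_succ_of_succ hblock hpos, add_sub_assoc]
    exact add_mem (hoff ▸ hprev) hrem

theorem sergeev_add_sub_lastColumn_mem {t i₀ : κ × Fin l} (htblock : t.1 = j.1)
    (ht : (t.2 : ℕ) + 1 = l) {k : ℕ} (hblock : i₀.1 = i.1) (hpos : (i.2 : ℕ) = i₀.2 + k)
    (a : Bool) :
    sergeev γ (l + k) a i j - powSign (l - 1) a • γ ⟨a, i₀, t⟩ ∈
      innerSpan γ a ((l : ℤ) - 1 - i₀.2) ⊔ weightFiltrationMod γ I (2 * ((l : ℤ) - 1 - i₀.2)) := by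
  induction k generalizing i with
  | zero =>
    obtain rfl : i = i₀ := Prod.ext hblock.symm (Fin.ext hpos)
    exact sergeev_sub_lastColumn_mem hγ hI hj htblock ht a
  | succ k ih =>
    obtain ⟨i', hblock', hpos'⟩ := exists_prev (i := i) (by omega)
    have hrem := sergeevRemainder_mem hγ hI hj (M := l + k) (i := i) (Or.inr (by omega)) a
    have hw : 2 * (((l + k : ℕ) : ℤ) - i.2) = 2 * ((l : ℤ) - 1 - i₀.2) := by omega
    rw [← add_assoc, sergeev_succ_of_succ hblock' hpos', add_sub_right_comm]
    exact add_mem (ih (hblock.trans hblock'.symm) (by omega)) (Submodule.mem_sup_right (hw ▸ hrem))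

end SergeevLeadingTerm

section Monomials

variable {κ A : Type*} {l : ℕ} [Fintype κ] [DecidableEq κ] [Ring A] [Algebra ℂ A]

/-- The element is a monomial of the given weight in the inner letters and in Sergeev's elements
`e^{(l+k)}_{i,j}`, `f^{(l+k)}_{i,j}` with `i` a last and `j` a first position of a block. The
natural number is the number of inner letters. -/
inductive IsMonomial (γ : Letter (κ × Fin l) → A) : ℤ → ℕ → A → Prop
  | one : IsMonomial γ 0 0 1
  | letter_mul {w : ℤ} {s : ℕ} {u : A} {d : Letter (κ × Fin l)} (hd : d.IsInner)
      (hu : IsMonomial γ w s u) : IsMonomial γ (d.weight + w) (s + 1) (γ d * u)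
  | sergeev_mul {w : ℤ} {s : ℕ} {u : A} (a : Bool) {k : ℕ} {i j : κ × Fin l} (hk : k < l)
      (hi : (i.2 : ℕ) + 1 = l) (hj : (j.2 : ℕ) = 0) (hu : IsMonomial γ w s u) :
      IsMonomial γ (2 * k + 1 + w) s (sergeev γ (l + k) a i j * u)

/-- The span modulo `I` of the monomials of weight at most `w` with at most `s` inner letters. -/
def monomialSpanMod (γ : Letter (κ × Fin l) → A) (I : Ideal A) (w : ℤ) (s : ℕ∞) :
    Submodule ℂ A :=
  Submodule.span ℂ {u | ∃ w' ≤ w, ∃ s' : ℕ, s' ≤ s ∧ IsMonomial γ w' s' u} ⊔ I.restrictScalars ℂ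

variable {γ : Letter (κ × Fin l) → A} {I : Ideal A} {w w' : ℤ} {s s' : ℕ∞}

theorem monomialSpanMod_mono (hw : w ≤ w') (hs : s ≤ s') :
    monomialSpanMod γ I w s ≤ monomialSpanMod γ I w' s' :=
  sup_le_sup_right (Submodule.span_mono (Set.ofPred_subset_ofPred.2
    fun _ ⟨w₁, hw₁, s₁, hs₁, hu⟩ => ⟨w₁, hw₁.trans hw, s₁, hs₁.trans hs, hu⟩)) _

theorem monomialSpanMod_le {N : Submodule ℂ A}
    (hmono : ∀ w' ≤ w, ∀ s' : ℕ, s' ≤ s → ∀ u, IsMonomial γ w' s' u → u ∈ N)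
    (hI : ∀ x ∈ I, x ∈ N) : monomialSpanMod γ I w s ≤ N :=
  sup_le (Submodule.span_le.2 fun u ⟨w', hw', s', hs', hu⟩ => hmono w' hw' s' hs' u hu) hI

theorem mem_monomialSpanMod_of_mem_ideal {x : A} (hx : x ∈ I) : x ∈ monomialSpanMod γ I w s :=
  Submodule.mem_sup_right hx

theorem IsMonomial.mem_monomialSpanMod {n : ℕ} {u : A} (hu : IsMonomial γ w n u) (hw : w ≤ w')
    (hn : n ≤ s) : u ∈ monomialSpanMod γ I w' s :=
  Submodule.mem_sup_left (Submodule.subset_span ⟨w, hw, n, hn, hu⟩)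

theorem IsMonomial.card_le_weight {n : ℕ} {u : A} (hu : IsMonomial γ w n u) : (n : ℤ) ≤ w := by
  induction hu with
  | one => simp
  | letter_mul hd _ ih => have := Letter.weight_pos hd.1; push_cast; omega
  | sergeev_mul => omega

theorem monomialSpanMod_top_le (w : ℤ) :
    monomialSpanMod γ I w ⊤ ≤ monomialSpanMod γ I w w.toNat :=
  monomialSpanMod_le
    (fun _ hw' _ _ _ hu => hu.mem_monomialSpanMod hw'
      (by exact_mod_cast Int.toNat_le_toNat (hu.card_le_weight.trans hw')))
    fun _ => mem_monomialSpanMod_of_mem_ideal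

theorem mul_mem_monomialSpanMod {x y : A}
    (hx : ∀ w₁ n u, IsMonomial γ w₁ n u → ∃ n', IsMonomial γ (w' + w₁) n' (x * u))
    (hy : y ∈ monomialSpanMod γ I w ⊤) : x * y ∈ monomialSpanMod γ I (w' + w) ⊤ := by
  suffices monomialSpanMod γ I w ⊤ ≤
      (monomialSpanMod γ I (w' + w) ⊤).comap (LinearMap.mulLeft ℂ x) from this hy
  refine monomialSpanMod_le (fun w₁ hw₁ n _ u hu => ?_) fun z hz =>
    mem_monomialSpanMod_of_mem_ideal (I.mul_mem_left x hz)
  obtain ⟨n', hn'⟩ := hx w₁ n u hu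
  exact hn'.mem_monomialSpanMod (by omega) le_top

theorem sergeev_generator_mem_parityFiltration {i j : κ × Fin l} (hi : (i.2 : ℕ) + 1 = l)
    (hj : (j.2 : ℕ) = 0) (k : ℕ) (a : Bool) :
    sergeev γ (l + k) a i j ∈ parityFiltration γ (2 * k + 1) a := by
  refine parityFiltration_mono ?_ a (sergeev_mem_parityFiltration hj (l + k) a i)
  rw [sergeevWeight, if_neg (by omega)]
  omega

theorem Letter.IsInner.mul_mem_monomialSpanMod {d : Letter (κ × Fin l)} (hd : d.IsInner)
    (hw : ∀ w' < w, weightFiltrationMod γ I w' ≤ monomialSpanMod γ I w' ⊤) {y : A}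
    (hy : y ∈ weightFiltrationMod γ I (w - d.weight)) : γ d * y ∈ monomialSpanMod γ I w ⊤ := by
  have hpos := Letter.weight_pos hd.1
  have hmul := _root_.mul_mem_monomialSpanMod (x := γ d) (fun _ _ _ hu => ⟨_, hu.letter_mul hd⟩)
    (hw _ (by omega) hy)
  rwa [add_sub_cancel] at hmul

theorem sergeev_generator_mul_mem
    (hw : ∀ w' < w, weightFiltrationMod γ I w' ≤ monomialSpanMod γ I w' ⊤)
    {i j : κ × Fin l} (hi : (i.2 : ℕ) + 1 = l) (hj : (j.2 : ℕ) = 0) {k : ℕ} (hk : k < l)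
    (a : Bool) {y : A} (hy : y ∈ weightFiltrationMod γ I (w - (2 * k + 1))) :
    sergeev γ (l + k) a i j * y ∈ monomialSpanMod γ I w ⊤ := by
  have hmul := mul_mem_monomialSpanMod (fun _ _ _ hu => ⟨_, hu.sergeev_mul a hk hi hj⟩)
    (hw _ (by omega) hy)
  rwa [add_sub_cancel] at hmul

variable (hγ : IsQueerFamily γ) (hI : ContainsShifts γ I)
include hγ hI

theorem lastColumn_letter_mul_mem
    (hw : ∀ w' < w, weightFiltrationMod γ I w' ≤ monomialSpanMod γ I w' ⊤)
    {d : Letter (κ × Fin l)} (hd : (d.col.2 : ℕ) + 1 = l) {y : A}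
    (hy : y ∈ weightFiltrationMod γ I (w - d.weight)) : γ d * y ∈ monomialSpanMod γ I w ⊤ := by
  obtain ⟨k, hk⟩ : ∃ k : ℕ, (k : ℤ) = d.offset :=
    ⟨d.col.2 - d.row.2, by simp only [Letter.offset]; omega⟩
  have hwt : d.weight = 2 * k + 1 := by rw [Letter.weight_of_nonneg (by omega), hk]
  have hkrow : (l : ℤ) - 1 - d.row.2 = k := by rw [hk, Letter.offset]; omega
  obtain ⟨i, hi, hiblock⟩ : ∃ i : κ × Fin l, (i.2 : ℕ) + 1 = l ∧ d.row.1 = i.1 :=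
    ⟨(d.row.1, d.col.2), hd, rfl⟩
  obtain ⟨j, hj, hjblock⟩ : ∃ j : κ × Fin l, (j.2 : ℕ) = 0 ∧ d.col.1 = j.1 :=
    ⟨(d.col.1, ⟨0, by omega⟩), rfl, rfl⟩
  set ε := powSign (l - 1) d.odd
  set g := sergeev γ (l + k) d.odd i j
  obtain ⟨r, hr, D, hD, hrD⟩ := Submodule.mem_sup.1 (sergeev_add_sub_lastColumn_mem hγ hI hj
    hjblock hd (i := i) hiblock (by omega) d.odd (k := k))
  rw [hkrow] at hr hD
  have hDpar : D ∈ parityFiltration γ (2 * k + 1) d.odd := by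
    rw [eq_sub_of_add_eq' hrD]
    exact sub_mem (sub_mem (sergeev_generator_mem_parityFiltration hi hj k d.odd)
      (Submodule.smul_mem _ _ (hwt ▸ letter_mem_parityFiltration d)))
      (innerSpan_le_parityFiltration _ _ hr)
  have hdecomp : γ d * y = ε • (g * y - r * y - D * y) := by
    have hlead : ε • γ d = g - r - D := by rw [sub_sub, hrD, sub_sub_cancel]
    rw [← sub_mul, ← sub_mul, ← hlead, smul_mul_assoc, smul_smul, powSign_mul_self, one_smul]
  rw [hwt] at hy
  rw [hdecomp]
  refine Submodule.smul_mem _ _ (sub_mem (sub_mem ?_ ?_) ?_)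
  · exact sergeev_generator_mul_mem hw hi hj (by omega) d.odd hy
  · suffices innerSpan γ d.odd k ≤
        (monomialSpanMod γ I w ⊤).comap (LinearMap.mulRight ℂ y) from this hr
    refine Submodule.span_le.2 ?_
    rintro _ ⟨e, ⟨he, -, hek⟩, rfl⟩
    exact Letter.IsInner.mul_mem_monomialSpanMod he hw (by rwa [Letter.weight_of_nonneg he.1, hek])
  · have hlow := hγ.mul_mem_weightFiltrationMod_of_lower hDpar (by simpa using hD) hy
    exact monomialSpanMod_mono (by omega) le_rfl (hw _ (by omega) hlow)

theorem wordProd_mem_monomialSpanMod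
    (hw : ∀ w' < w, weightFiltrationMod γ I w' ≤ monomialSpanMod γ I w' ⊤)
    (ds : List (Letter (κ × Fin l))) (hds : wordWeight ds ≤ w) :
    wordProd γ ds ∈ monomialSpanMod γ I w ⊤ := by
  induction ds with
  | nil => simpa using IsMonomial.one.mem_monomialSpanMod hds le_top
  | cons d ds ih =>
    rw [wordWeight_cons] at hds
    rw [wordProd_cons]
    have hmem : wordProd γ ds ∈ weightFiltrationMod γ I (w - d.weight) :=
      weightFiltration_le_weightFiltrationMod _ (wordProd_mem_wordSpan (by simpa using by omega))
    rcases le_or_gt 0 d.offset with hd | hd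
    · by_cases hcol : (d.col.2 : ℕ) + 1 < l
      · exact Letter.IsInner.mul_mem_monomialSpanMod ⟨hd, hcol⟩ hw hmem
      · exact lastColumn_letter_mul_mem hγ hI hw (by omega) hmem
    · have hlow := hγ.shiftedLetter_mul_mem hI hd hmem
      rw [letter_mul_eq]
      refine add_mem (monomialSpanMod_mono (by omega) le_rfl (hw _ (by omega) hlow)) ?_
      by_cases h₀ : d.weight = 0
      · exact Submodule.smul_mem _ _ (ih (by omega))
      · simp [Letter.character_of_weight_ne_zero h₀]

theorem weightFiltrationMod_le_monomialSpanMod (w : ℤ) :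
    weightFiltrationMod γ I w ≤ monomialSpanMod γ I w ⊤ := by
  induction hN : (w + 1).toNat using Nat.strong_induction_on generalizing w with
  | _ N ih =>
  rcases lt_or_ge w 0 with hneg | hnonneg
  · exact (hγ.weightFiltrationMod_le_ideal hI hneg).trans le_sup_right
  · exact weightFiltrationMod_le (wordProd_mem_monomialSpanMod hγ hI
      fun w' hw' => ih _ (by omega) w' rfl) fun _ => mem_monomialSpanMod_of_mem_ideal

end Monomials

section Dual

variable {κ : Type*} {l : ℕ}

/-- The index at `t` positions to the right of `i` in the same block. The position is reduced
modulo `l`, so this has the intended meaning only for `i.2 + t < l`. -/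
def shiftRight (i : κ × Fin l) (t : ℕ) : κ × Fin l :=
  (i.1, ⟨(i.2 + t) % l, Nat.mod_lt _ (Fin.pos i.2)⟩)

theorem shiftRight_zero (i : κ × Fin l) : shiftRight i 0 = i := by
  simp [shiftRight, Nat.mod_eq_of_lt i.2.isLt]

theorem shiftRight_snd {i : κ × Fin l} {t : ℕ} (h : i.2 + t < l) :
    ((shiftRight i t).2 : ℕ) = i.2 + t := Nat.mod_eq_of_lt h

theorem shiftRight_eq_iff {i j : κ × Fin l} {t : ℕ} (h : i.2 + t < l) :
    shiftRight i t = j ↔ i.1 = j.1 ∧ (i.2 + t : ℕ) = j.2 := by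
  rw [Prod.ext_iff, Fin.ext_iff, shiftRight_snd h]; rfl

namespace Letter

/-- The lower letter pairing nontrivially with `d` under the form `(a, b) ↦ χ([a, b])`, translated
by `t` positions along its diagonal. -/
def dual (d : Letter (κ × Fin l)) (t : ℕ) : Letter (κ × Fin l) :=
  ⟨d.odd, shiftRight d.col (1 + t), shiftRight d.row t⟩

/-- The indicator of `e` being the translate of `d` by `t` positions along its diagonal. -/
def translateIndicator (d e : Letter (κ × Fin l)) (t : ℕ) : ℂ :=
  if d.odd = e.odd ∧ shiftRight d.row t = e.row ∧ shiftRight d.col t = e.col then 1 else 0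

variable {d e : Letter (κ × Fin l)} {t : ℕ}

theorem dual_row_snd (ht : t < l - 1 - d.col.2) : ((d.dual t).row.2 : ℕ) = d.col.2 + (1 + t) :=
  shiftRight_snd (by omega)

theorem dual_col_snd (hd : d.IsInner) (ht : t < l - 1 - d.col.2) :
    ((d.dual t).col.2 : ℕ) = d.row.2 + t :=
  shiftRight_snd (by have := hd.1; unfold offset at this; omega)

theorem dual_offset (hd : d.IsInner) (ht : t < l - 1 - d.col.2) :
    (d.dual t).offset = -1 - d.offset := by
  rw [offset, dual_row_snd ht, dual_col_snd hd ht, offset]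
  push_cast; ring

theorem dual_offset_neg (hd : d.IsInner) (ht : t < l - 1 - d.col.2) : (d.dual t).offset < 0 := by
  have := hd.1
  rw [dual_offset hd ht]; omega

theorem translateIndicator_zero (d e : Letter (κ × Fin l)) :
    translateIndicator d e 0 = if d = e then 1 else 0 := by
  simp only [translateIndicator, shiftRight_zero, Letter.ext_iff]

theorem translateIndicator_last (hd : d.IsInner) (he : e.IsInner) :
    translateIndicator d e (l - 1 - d.col.2) = 0 := by
  refine if_neg fun ⟨_, _, hcol⟩ => ?_
  have h₁ := hd.2
  have h₂ := he.2
  rw [← hcol, shiftRight_snd (by omega)] at h₂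
  omega

theorem koszulSign_mul_translateIndicator (d e : Letter (κ × Fin l)) (t : ℕ) :
    koszulSign d.odd e.odd * translateIndicator d e t =
      koszulSign d.odd d.odd * translateIndicator d e t := by
  unfold translateIndicator
  split_ifs with h
  · rw [← h.1]
  · simp only [mul_zero]

theorem sum_translateIndicator (hd : d.IsInner) (he : e.IsInner) :
    ∑ t ∈ Finset.range (l - 1 - d.col.2), koszulSign d.odd d.odd ^ t *
        (d.translateIndicator e t - koszulSign d.odd d.odd * d.translateIndicator e (t + 1)) =
      if d = e then 1 else 0 := by
  calc _ = ∑ t ∈ Finset.range (l - 1 - d.col.2),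
        (koszulSign d.odd d.odd ^ t * d.translateIndicator e t -
          koszulSign d.odd d.odd ^ (t + 1) * d.translateIndicator e (t + 1)) :=
        Finset.sum_congr rfl fun t _ => by ring
    _ = d.translateIndicator e 0 := by
        rw [Finset.sum_range_sub', translateIndicator_last hd he]; simp
    _ = _ := translateIndicator_zero d e

variable [DecidableEq κ]

theorem character_dual_comp (hd : d.IsInner) (ht : t < l - 1 - d.col.2) :
    (if (d.dual t).col = e.row then character ⟨d.odd ^^ e.odd, (d.dual t).row, e.col⟩ else 0) =
      translateIndicator d e t := by
  have hoff := hd.1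
  unfold offset at hoff
  simp only [character, translateIndicator, dual,
    shiftRight_snd (show d.col.2 + (1 + t) < l by omega),
    shiftRight_eq_iff (show d.row.2 + t < l by omega),
    shiftRight_eq_iff (show d.col.2 + t < l by omega), ← ite_and, bne_eq_false_iff_eq]
  refine if_congr ?_ rfl rfl
  simp only [shiftRight]
  grind

theorem character_comp_dual (hd : d.IsInner) (ht : t < l - 1 - d.col.2) :
    (if e.col = (d.dual t).row then character ⟨d.odd ^^ e.odd, e.row, (d.dual t).col⟩ else 0) =
      translateIndicator d e (t + 1) := by
  have hoff := hd.1
  unfold offset at hoff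
  simp only [character, translateIndicator, dual, shiftRight_snd (show d.row.2 + t < l by omega),
    shiftRight_eq_iff (show d.row.2 + (t + 1) < l by omega), eq_comm (a := e.col),
    shiftRight_eq_iff (show d.col.2 + (1 + t) < l by omega),
    shiftRight_eq_iff (show d.col.2 + (t + 1) < l by omega), ← ite_and, bne_eq_false_iff_eq]
  refine if_congr ?_ rfl rfl
  simp only [shiftRight]
  grind

end Letter

end Dual

section LoweringOperator

variable {κ A : Type*} {l : ℕ} [DecidableEq κ] [Ring A] [Algebra ℂ A]
  {γ : Letter (κ × Fin l) → A} {I : Ideal A} {w : ℤ} {d e : Letter (κ × Fin l)}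

theorem IsQueerFamily.letter_mul_sub_mem (hγ : IsQueerFamily γ) (hI : ContainsShifts γ I)
    (d : Letter (κ × Fin l)) {v : A} (hv : v ∈ weightFiltrationMod γ I w) :
    γ d * v - d.character • v ∈ weightFiltrationMod γ I (2 * d.offset + 1 + w) := by
  rcases le_or_gt 0 d.offset with hd | hd
  · have hchar : d.character = 0 :=
      Letter.character_of_weight_ne_zero (Letter.weight_pos hd).ne'
    rw [hchar, zero_smul, sub_zero, ← Letter.weight_of_nonneg hd]
    exact letter_mul_mem_weightFiltrationMod d hv
  · rw [letter_mul_eq, add_sub_cancel_right]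
    refine weightFiltrationMod_mono ?_ (hγ.shiftedLetter_mul_mem hI hd hv)
    rw [Letter.weight_of_neg hd]; omega

variable (γ) in
/-- The element `∂_d` of `U(m)` acting modulo lower weight as the (super)derivative with respect
to the inner letter `d`. The alternating sum over the diagonal makes the commutators with the other
inner letters telescope. -/
def loweringOperator (d : Letter (κ × Fin l)) : A :=
  ∑ t ∈ Finset.range (l - 1 - d.col.2),
    koszulSign d.odd d.odd ^ t • shiftedLetter γ (d.dual t)

theorem IsQueerFamily.loweringOperator_mul_mem (hγ : IsQueerFamily γ) (hI : ContainsShifts γ I)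
    (hd : d.IsInner) {v : A} (hv : v ∈ weightFiltrationMod γ I w) :
    loweringOperator γ d * v ∈ weightFiltrationMod γ I (w - d.weight) := by
  rw [loweringOperator, Finset.sum_mul]
  refine sum_mem fun t ht => ?_
  rw [Finset.mem_range] at ht
  have hlow := Letter.dual_offset_neg hd ht
  rw [smul_mul_assoc]
  refine Submodule.smul_mem _ _
    (weightFiltrationMod_mono (le_of_eq ?_) (hγ.shiftedLetter_mul_mem hI hlow hv))
  rw [Letter.weight_of_neg hlow, Letter.dual_offset hd ht, Letter.weight_of_nonneg hd.1]
  ring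

theorem IsQueerFamily.superComm_shiftedLetter_dual_mul_sub_mem (hγ : IsQueerFamily γ)
    (hI : ContainsShifts γ I) (hd : d.IsInner) (he : e.IsInner) {t : ℕ}
    (ht : t < l - 1 - d.col.2) {v : A} (hv : v ∈ weightFiltrationMod γ I w) :
    superComm d.odd e.odd (shiftedLetter γ (d.dual t)) (γ e) * v -
        (d.translateIndicator e t - koszulSign d.odd d.odd * d.translateIndicator e (t + 1)) • v ∈
      weightFiltrationMod γ I (e.weight + w - d.weight - 1) := by
  have residue (z : Letter (κ × Fin l)) (hz : z.offset = (d.dual t).offset + e.offset) :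
      γ z * v - z.character • v ∈ weightFiltrationMod γ I (e.weight + w - d.weight - 1) := by
    refine weightFiltrationMod_mono (le_of_eq ?_) (hγ.letter_mul_sub_mem hI z hv)
    rw [hz, Letter.dual_offset hd ht, Letter.weight_of_nonneg hd.1, Letter.weight_of_nonneg he.1]
    ring
  have bracket : superComm d.odd e.odd (shiftedLetter γ (d.dual t)) (γ e) =
      (if (d.dual t).col = e.row then γ ⟨d.odd ^^ e.odd, (d.dual t).row, e.col⟩ else 0) -
        koszulSign d.odd e.odd •
          (if e.col = (d.dual t).row then γ ⟨d.odd ^^ e.odd, e.row, (d.dual t).col⟩ else 0) :=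
    (superComm_shiftedLetter (d.dual t) e.odd (γ e)).trans (hγ (d.dual t) e)
  rw [bracket, ← Letter.koszulSign_mul_translateIndicator, ← Letter.character_dual_comp hd ht,
    ← Letter.character_comp_dual hd ht, sub_mul, sub_smul, sub_sub_sub_comm, smul_mul_assoc,
    mul_smul, ← smul_sub]
  refine sub_mem ?_ (Submodule.smul_mem _ _ ?_)
  · split_ifs with h
    · exact residue _ (by simp only [Letter.offset, ← h]; ring)
    · simp
  · split_ifs with h
    · exact residue _ (by simp only [Letter.offset, ← h]; ring)
    · simp

theorem IsQueerFamily.superComm_loweringOperator_mul_sub_mem (hγ : IsQueerFamily γ)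
    (hI : ContainsShifts γ I) (hd : d.IsInner) (he : e.IsInner) {v : A}
    (hv : v ∈ weightFiltrationMod γ I w) :
    superComm d.odd e.odd (loweringOperator γ d) (γ e) * v - (if d = e then (1 : ℂ) else 0) • v ∈
      weightFiltrationMod γ I (e.weight + w - d.weight - 1) := by
  rw [← Letter.sum_translateIndicator hd he, loweringOperator, map_sum, LinearMap.sum_apply,
    Finset.sum_mul, Finset.sum_smul, ← Finset.sum_sub_distrib]
  refine sum_mem fun t ht => ?_
  rw [map_smul, LinearMap.smul_apply, smul_mul_assoc, mul_smul, ← smul_sub]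
  exact Submodule.smul_mem _ _ (hγ.superComm_shiftedLetter_dual_mul_sub_mem hI hd he
    (Finset.mem_range.1 ht) hv)

variable [Fintype κ] {i j : κ × Fin l}

theorem IsQueerFamily.superComm_sergeev_eq_zero (hγ : IsQueerFamily γ) (hd : d.offset < 0)
    (hi : (i.2 : ℕ) + 1 = l) (hj : (j.2 : ℕ) = 0) (M : ℕ) (a : Bool) :
    superComm d.odd a (γ d) (sergeev γ M a i j) = 0 := by
  unfold Letter.offset at hd
  have hcol : d.col ≠ i := by rintro rfl; omega
  have hrow : j ≠ d.row := by rintro rfl; omega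
  rw [hγ.superComm_sergeev, if_neg hcol, if_neg hrow, smul_zero, sub_zero]

theorem IsQueerFamily.superComm_loweringOperator_sergeev (hγ : IsQueerFamily γ) (hd : d.IsInner)
    (hi : (i.2 : ℕ) + 1 = l) (hj : (j.2 : ℕ) = 0) (M : ℕ) (a : Bool) :
    superComm d.odd a (loweringOperator γ d) (sergeev γ M a i j) = 0 := by
  rw [loweringOperator, map_sum, LinearMap.sum_apply]
  refine Finset.sum_eq_zero fun t ht => ?_
  have hdual : superComm d.odd a (shiftedLetter γ (d.dual t)) (sergeev γ M a i j) = 0 :=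
    (superComm_shiftedLetter (d.dual t) a _).trans
      (hγ.superComm_sergeev_eq_zero (Letter.dual_offset_neg hd (Finset.mem_range.1 ht)) hi hj M a)
  rw [map_smul, LinearMap.smul_apply, hdual, smul_zero]

end LoweringOperator

section Whittaker

variable {κ A : Type*} {l : ℕ} [DecidableEq κ] [Ring A] [Algebra ℂ A]

/-- The elements whose classes in the quotient by `I` are Whittaker vectors, i.e. are killed by
`a - χ(a)` for all letters `a` of the nilpotent subalgebra `m`. -/
def whittaker (γ : Letter (κ × Fin l) → A) (I : Ideal A) : Submodule ℂ A :=
  ⨅ d : {d : Letter (κ × Fin l) // d.offset < 0},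
    (I.restrictScalars ℂ).comap (LinearMap.mulLeft ℂ (shiftedLetter γ d))

variable {γ : Letter (κ × Fin l) → A} {I : Ideal A} {d : Letter (κ × Fin l)} {v : A}

theorem mem_whittaker :
    v ∈ whittaker γ I ↔ ∀ d : Letter (κ × Fin l), d.offset < 0 → shiftedLetter γ d * v ∈ I := by
  simp [whittaker]

theorem loweringOperator_mul_mem_ideal (hd : d.IsInner) (hv : v ∈ whittaker γ I) :
    loweringOperator γ d * v ∈ I := by
  rw [loweringOperator, Finset.sum_mul]
  refine sum_mem fun t ht => ?_
  rw [smul_mul_assoc]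
  exact I.smul_of_tower_mem _
    (mem_whittaker.1 hv _ (Letter.dual_offset_neg hd (Finset.mem_range.1 ht)))

theorem ContainsShifts.one_mem_whittaker (hI : ContainsShifts γ I) : 1 ∈ whittaker γ I :=
  mem_whittaker.2 fun d hd => by rw [mul_one]; exact hI d hd

theorem ideal_le_whittaker : I.restrictScalars ℂ ≤ whittaker γ I :=
  fun _ hx => mem_whittaker.2 fun _ _ => I.mul_mem_left _ hx

theorem IsQueerFamily.sergeev_mul_mem_whittaker [Fintype κ] (hγ : IsQueerFamily γ)
    {i j : κ × Fin l} (hi : (i.2 : ℕ) + 1 = l) (hj : (j.2 : ℕ) = 0) (M : ℕ) (a : Bool)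
    (hv : v ∈ whittaker γ I) : sergeev γ M a i j * v ∈ whittaker γ I := by
  refine mem_whittaker.2 fun d hd => ?_
  rw [← mul_assoc, mul_eq_superComm_add d.odd a (shiftedLetter γ d) (sergeev γ M a i j),
    superComm_shiftedLetter, hγ.superComm_sergeev_eq_zero hd hi hj, zero_add, smul_mul_assoc,
    mul_assoc]
  exact I.smul_of_tower_mem _ (I.mul_mem_left _ (mem_whittaker.1 hv d hd))

end Whittaker

section Euler

instance {ι : Type*} [Fintype ι] : Fintype (Letter ι) :=
  Fintype.ofInjective (fun d => (d.odd, d.row, d.col)) fun d e h => by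
    simp only [Prod.mk.injEq] at h
    exact Letter.ext h.1 h.2.1 h.2.2

variable {κ A : Type*} {l : ℕ} [Fintype κ] [DecidableEq κ] [Ring A] [Algebra ℂ A]
  {γ : Letter (κ × Fin l) → A} {I : Ideal A} {w w' : ℤ} {v : A}

variable (γ) in
/-- The Euler operator `∑ d, d · ∂_d` over the inner letters. Modulo lower weight it multiplies a
monomial by the number of its inner letters. -/
def eulerOperator : A :=
  ∑ d : Letter (κ × Fin l) with d.IsInner, γ d * loweringOperator γ d

theorem eulerOperator_mul_mem_ideal (hv : v ∈ whittaker γ I) : eulerOperator γ * v ∈ I := by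
  rw [eulerOperator, Finset.sum_mul]
  refine sum_mem fun d hd => ?_
  rw [mul_assoc]
  exact I.mul_mem_left _ (loweringOperator_mul_mem_ideal (Finset.mem_filter.1 hd).2 hv)

theorem IsQueerFamily.eulerOperator_mul_mem (hγ : IsQueerFamily γ) (hI : ContainsShifts γ I)
    (hv : v ∈ weightFiltrationMod γ I w) : eulerOperator γ * v ∈ weightFiltrationMod γ I w := by
  rw [eulerOperator, Finset.sum_mul]
  refine sum_mem fun d hd => ?_
  rw [mul_assoc, ← add_sub_cancel d.weight w]
  exact letter_mul_mem_weightFiltrationMod d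
    (hγ.loweringOperator_mul_mem hI (Finset.mem_filter.1 hd).2 hv)

theorem IsQueerFamily.superComm_eulerOperator_mul_sub_mem (hγ : IsQueerFamily γ)
    (hI : ContainsShifts γ I) {a : Bool} {z : A} (hz : z ∈ parityFiltration γ w' a)
    (hv : v ∈ weightFiltrationMod γ I w) (c : Letter (κ × Fin l) → ℂ)
    (hc : ∀ d : Letter (κ × Fin l), d.IsInner →
      superComm d.odd a (loweringOperator γ d) z * v - c d • v ∈
        weightFiltrationMod γ I (w' + w - d.weight - 1)) :
    superComm false a (eulerOperator γ) z * v -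
        ∑ d : Letter (κ × Fin l) with d.IsInner, c d • (γ d * v) ∈
      weightFiltrationMod γ I (w' + w - 1) := by
  rw [eulerOperator, map_sum, LinearMap.sum_apply, Finset.sum_mul, ← Finset.sum_sub_distrib]
  refine sum_mem fun d hd => ?_
  have hd : d.IsInner := (Finset.mem_filter.1 hd).2
  have leibniz : superComm false a (γ d * loweringOperator γ d) z * v - c d • (γ d * v) =
      γ d * (superComm d.odd a (loweringOperator γ d) z * v - c d • v) +
        koszulSign d.odd a • (superComm d.odd a (γ d) z * (loweringOperator γ d * v)) := by
    rw [← Bool.xor_self d.odd, superComm_mul_left, mul_sub, add_mul, smul_mul_assoc, mul_smul_comm,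
      mul_assoc, mul_assoc]
    abel
  have hbracket := parityFiltration_le_weightFiltration _ _
    (hγ.superComm_mem_parityFiltration (letter_mem_parityFiltration d) hz)
  rw [leibniz]
  refine add_mem ?_ (Submodule.smul_mem _ _ ?_)
  · exact weightFiltrationMod_mono (by omega) (letter_mul_mem_weightFiltrationMod d (hc d hd))
  · exact weightFiltrationMod_mono (by omega)
      (mul_mem_weightFiltrationMod hbracket (hγ.loweringOperator_mul_mem hI hd hv))

theorem IsQueerFamily.superComm_eulerOperator_letter (hγ : IsQueerFamily γ)
    (hI : ContainsShifts γ I) {e : Letter (κ × Fin l)} (he : e.IsInner)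
    (hv : v ∈ weightFiltrationMod γ I w) :
    superComm false e.odd (eulerOperator γ) (γ e) * v - γ e * v ∈
      weightFiltrationMod γ I (e.weight + w - 1) := by
  have h := hγ.superComm_eulerOperator_mul_sub_mem hI (letter_mem_parityFiltration e) hv
    (fun d => if d = e then 1 else 0)
    fun d hd => hγ.superComm_loweringOperator_mul_sub_mem hI hd he hv
  simpa [he] using h

theorem IsQueerFamily.superComm_eulerOperator_sergeev (hγ : IsQueerFamily γ)
    (hI : ContainsShifts γ I) {i j : κ × Fin l} (hi : (i.2 : ℕ) + 1 = l) (hj : (j.2 : ℕ) = 0)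
    (k : ℕ) (a : Bool) (hv : v ∈ weightFiltrationMod γ I w) :
    superComm false a (eulerOperator γ) (sergeev γ (l + k) a i j) * v ∈
      weightFiltrationMod γ I (2 * k + 1 + w - 1) := by
  have h := hγ.superComm_eulerOperator_mul_sub_mem hI
    (sergeev_generator_mem_parityFiltration hi hj k a) hv (fun _ => 0)
    fun d hd => by simp [hγ.superComm_loweringOperator_sergeev hd hi hj]
  simpa using h

theorem IsMonomial.mem_weightFiltrationMod {s : ℕ} {u : A} (hu : IsMonomial γ w s u) :
    u ∈ weightFiltrationMod γ I w := by
  induction hu with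
  | one => exact parityFiltration_le_weightFiltrationMod _ _ one_mem_parityFiltration
  | letter_mul _ _ ih => exact letter_mul_mem_weightFiltrationMod _ ih
  | sergeev_mul a _ hi hj _ ih =>
    exact mul_mem_weightFiltrationMod (parityFiltration_le_weightFiltration _ _
      (sergeev_generator_mem_parityFiltration hi hj _ a)) ih

theorem IsMonomial.eulerOperator_mul_sub_mem (hγ : IsQueerFamily γ) (hI : ContainsShifts γ I)
    {s : ℕ} {u : A} (hu : IsMonomial γ w s u) :
    eulerOperator γ * u - (s : ℂ) • u ∈ weightFiltrationMod γ I (w - 1) := by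
  have product_rule (a : Bool) (z u : A) : eulerOperator γ * (z * u) =
      superComm false a (eulerOperator γ) z * u + z * (eulerOperator γ * u) := by
    rw [superComm_apply, koszulSign_false_left, one_smul, sub_mul, mul_assoc, mul_assoc,
      sub_add_cancel]
  induction hu with
  | one =>
    rw [Nat.cast_zero, zero_smul, sub_zero]
    exact mem_weightFiltrationMod_of_mem_ideal (eulerOperator_mul_mem_ideal hI.one_mem_whittaker)
  | @letter_mul w s u d hd hu ih =>
    have hcomm := hγ.superComm_eulerOperator_letter hI hd (hu.mem_weightFiltrationMod (I := I))
    have hrest := letter_mul_mem_weightFiltrationMod d ih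
    rw [← add_sub_assoc] at hrest
    convert add_mem hcomm hrest using 1
    rw [product_rule d.odd, mul_sub, mul_smul_comm, Nat.cast_succ, add_smul, one_smul]
    abel
  | @sergeev_mul w s u a k i j _ hi hj hu ih =>
    have hcomm := hγ.superComm_eulerOperator_sergeev hI hi hj k a
      (hu.mem_weightFiltrationMod (I := I))
    have hrest := mul_mem_weightFiltrationMod (parityFiltration_le_weightFiltration _ _
      (sergeev_generator_mem_parityFiltration hi hj k a)) ih
    rw [← add_sub_assoc] at hrest
    convert add_mem hcomm hrest using 1
    rw [product_rule a, mul_sub, mul_smul_comm]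
    abel

end Euler

section Generation

variable {κ A : Type*} {l : ℕ} [Fintype κ] [DecidableEq κ] [Ring A] [Algebra ℂ A]
  {γ : Letter (κ × Fin l) → A} {I : Ideal A} {w : ℤ} {s : ℕ} {u v : A}

variable (γ) in
/-- Sergeev's elements `e^{(l+k)}_{i,j}` and `f^{(l+k)}_{i,j}`, `0 ≤ k < l`, whose row `i` is a
last and whose column `j` is a first position of a block. -/
def sergeevGenerators : Set A :=
  {x | ∃ (a : Bool) (k : ℕ) (i j : κ × Fin l), k < l ∧ (i.2 : ℕ) + 1 = l ∧ (j.2 : ℕ) = 0 ∧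
    sergeev γ (l + k) a i j = x}

theorem IsMonomial.mem_adjoin_of_eq_zero (hu : IsMonomial γ w s u) (hs : s = 0) :
    u ∈ Algebra.adjoin ℂ (sergeevGenerators γ) := by
  induction hu with
  | one => exact one_mem _
  | letter_mul => cases hs
  | sergeev_mul a hk hi hj _ ih =>
    exact mul_mem (Algebra.subset_adjoin ⟨a, _, _, _, hk, hi, hj, rfl⟩) (ih hs)

theorem IsMonomial.mem_whittaker_of_eq_zero (hγ : IsQueerFamily γ) (hI : ContainsShifts γ I)
    (hu : IsMonomial γ w s u) (hs : s = 0) : u ∈ whittaker γ I := by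
  induction hu with
  | one => exact hI.one_mem_whittaker
  | letter_mul => cases hs
  | sergeev_mul a _ hi hj _ ih => exact hγ.sergeev_mul_mem_whittaker hi hj _ a (ih hs)

theorem monomialSpanMod_zero_le_adjoin (w : ℤ) : monomialSpanMod γ I w 0 ≤
    Subalgebra.toSubmodule (Algebra.adjoin ℂ (sergeevGenerators γ)) ⊔ I.restrictScalars ℂ :=
  monomialSpanMod_le (fun _ _ _ hs _ hu => Submodule.mem_sup_left
    (hu.mem_adjoin_of_eq_zero (by simpa using hs))) fun _ hx => Submodule.mem_sup_right hx

theorem IsQueerFamily.monomialSpanMod_zero_le_whittaker (hγ : IsQueerFamily γ)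
    (hI : ContainsShifts γ I) (w : ℤ) : monomialSpanMod γ I w 0 ≤ whittaker γ I :=
  monomialSpanMod_le (fun _ _ _ hs _ hu =>
    hu.mem_whittaker_of_eq_zero hγ hI (by simpa using hs)) fun _ hx => ideal_le_whittaker hx

theorem IsQueerFamily.eulerOperator_mul_sub_mem_of_mem_monomialSpanMod (hγ : IsQueerFamily γ)
    (hI : ContainsShifts γ I) (hu : u ∈ monomialSpanMod γ I w (s + 1 : ℕ)) :
    eulerOperator γ * u - ((s + 1 : ℕ) : ℂ) • u ∈
      monomialSpanMod γ I w s ⊔ weightFiltrationMod γ I (w - 1) := by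
  suffices monomialSpanMod γ I w (s + 1 : ℕ) ≤
      (monomialSpanMod γ I w s ⊔ weightFiltrationMod γ I (w - 1)).comap
        (LinearMap.mulLeft ℂ (eulerOperator γ) - ((s + 1 : ℕ) : ℂ) • LinearMap.id) from this hu
  refine monomialSpanMod_le (fun w' hw n hn x hx => ?_) fun x hx =>
    Submodule.mem_sup_left (mem_monomialSpanMod_of_mem_ideal
      (sub_mem (I.mul_mem_left _ hx) (I.smul_of_tower_mem _ hx)))
  have heuler : eulerOperator γ * x - (n : ℂ) • x ∈ weightFiltrationMod γ I (w - 1) :=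
    weightFiltrationMod_mono (by omega) (hx.eulerOperator_mul_sub_mem hγ hI)
  change eulerOperator γ * x - ((s + 1 : ℕ) : ℂ) • x ∈
    monomialSpanMod γ I w s ⊔ weightFiltrationMod γ I (w - 1)
  rcases (Nat.cast_le.1 hn).lt_or_eq with hlt | rfl
  · have hmem : x ∈ monomialSpanMod γ I w s :=
      hx.mem_monomialSpanMod hw (Nat.cast_le.2 (Nat.le_of_lt_succ hlt))
    rw [← sub_add_sub_cancel _ ((n : ℂ) • x), ← sub_smul]
    exact add_mem (Submodule.mem_sup_right heuler)
      (Submodule.mem_sup_left (Submodule.smul_mem _ _ hmem))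
  · exact Submodule.mem_sup_right heuler

theorem IsQueerFamily.mem_monomialSpanMod_zero_sup (hγ : IsQueerFamily γ)
    (hI : ContainsShifts γ I) (hv : v ∈ whittaker γ I)
    (hs : v ∈ monomialSpanMod γ I w s ⊔ weightFiltrationMod γ I (w - 1)) :
    v ∈ monomialSpanMod γ I w 0 ⊔ weightFiltrationMod γ I (w - 1) := by
  induction s with
  | zero => exact hs
  | succ s ih =>
    apply ih
    obtain ⟨u, hu, b, hb, rfl⟩ := Submodule.mem_sup.1 hs
    have hEu := hγ.eulerOperator_mul_sub_mem_of_mem_monomialSpanMod hI hu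
    have hEb := Submodule.mem_sup_right (S := monomialSpanMod γ I w s)
      (hγ.eulerOperator_mul_mem hI hb)
    have hEv : eulerOperator γ * (u + b) ∈
        monomialSpanMod γ I w s ⊔ weightFiltrationMod γ I (w - 1) :=
      Submodule.mem_sup_right
        (mem_weightFiltrationMod_of_mem_ideal (eulerOperator_mul_mem_ideal hv))
    have hsmul : ((s + 1 : ℕ) : ℂ) • u = eulerOperator γ * (u + b) - eulerOperator γ * b -
        (eulerOperator γ * u - ((s + 1 : ℕ) : ℂ) • u) := by
      rw [mul_add]; abel
    have hu' : ((s + 1 : ℕ) : ℂ) • u ∈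
        monomialSpanMod γ I w s ⊔ weightFiltrationMod γ I (w - 1) :=
      hsmul ▸ sub_mem (sub_mem hEv hEb) hEu
    exact add_mem ((Submodule.smul_mem_iff _ (Nat.cast_ne_zero.2 s.succ_ne_zero)).1 hu')
      (Submodule.mem_sup_right hb)

theorem IsQueerFamily.whittaker_le_adjoin_sup_ideal (hγ : IsQueerFamily γ)
    (hspan : Algebra.adjoin ℂ (Set.range γ) = ⊤) (hI : ContainsShifts γ I) :
    whittaker γ I ≤
      Subalgebra.toSubmodule (Algebra.adjoin ℂ (sergeevGenerators γ)) ⊔ I.restrictScalars ℂ := by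
  suffices ∀ (N : ℕ), ∀ v ∈ weightFiltrationMod γ I ((N : ℤ) - 1), v ∈ whittaker γ I →
      v ∈ Subalgebra.toSubmodule (Algebra.adjoin ℂ (sergeevGenerators γ)) ⊔
        I.restrictScalars ℂ by
    intro v hv
    obtain ⟨N, hN⟩ := exists_mem_weightFiltration hspan v
    refine this (N + 1) v ?_ hv
    rw [Nat.cast_succ, add_sub_cancel_right]
    exact weightFiltration_le_weightFiltrationMod _ hN
  intro N
  induction N with
  | zero =>
    exact fun v hv _ => Submodule.mem_sup_right (hγ.weightFiltrationMod_le_ideal hI (by simp) hv)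
  | succ N ih =>
    intro v hv hwhit
    rw [Nat.cast_succ, add_sub_cancel_right] at hv
    have hmono : v ∈ monomialSpanMod γ I N (N : ℤ).toNat :=
      monomialSpanMod_top_le _ (weightFiltrationMod_le_monomialSpanMod hγ hI _ hv)
    obtain ⟨u, hu, b, hb, rfl⟩ := Submodule.mem_sup.1
      (hγ.mem_monomialSpanMod_zero_sup hI hwhit (Submodule.mem_sup_left hmono))
    have hb' : b ∈ whittaker γ I :=
      (Submodule.add_mem_iff_right _ (hγ.monomialSpanMod_zero_le_whittaker hI _ hu)).1 hwhit
    exact add_mem (monomialSpanMod_zero_le_adjoin _ hu) (ih b hb hb')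

end Generation

section QueerFamily

variable {ι A : Type*} [DecidableEq ι] [Ring A] [Algebra ℂ A]

theorem koszulSign_true_smul (a : Bool) (x : A) :
    koszulSign true a • x = if a then -x else x := by
  cases a <;> simp [koszulSign]

theorem IsQueerFamily.of_relations {e f : ι → ι → A}
    (hee : ∀ i j k m, e i j * e k m - e k m * e i j =
      (if j = k then e i m else 0) - (if m = i then e k j else 0))
    (hef : ∀ i j k m, e i j * f k m - f k m * e i j =
      (if j = k then f i m else 0) - (if m = i then f k j else 0))
    (hff : ∀ i j k m, f i j * f k m + f k m * f i j =
      (if j = k then e i m else 0) + (if m = i then e k j else 0)) :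
    IsQueerFamily fun d : Letter ι => (if d.odd then f else e) d.row d.col := by
  rintro ⟨a, i, j⟩ ⟨b, k, m⟩
  cases a <;> cases b
  · simpa [superComm_apply] using hee i j k m
  · simpa [superComm_apply] using hef i j k m
  · simpa [superComm_apply] using congrArg Neg.neg (hef k m i j)
  · simpa [superComm_apply, koszulSign_true_smul, -smul_ite] using hff i j k m

theorem map_sergeev [Fintype ι] {γ : Letter ι → A} {σ : A →ₐ[ℂ] A}
    (hσ : ∀ d, σ (γ d) = if d.odd then -γ d else γ d) (M : ℕ) (a : Bool) (i j : ι) :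
    σ (sergeev γ M a i j) = if a then -sergeev γ M a i j else sergeev γ M a i j := by
  simp only [← koszulSign_true_smul] at hσ ⊢
  induction M generalizing a i with
  | zero => cases a <;> simp [sergeev]
  | succ M ih =>
    simp only [sergeev, map_sum, map_smul, map_mul, hσ, ih, Finset.smul_sum]
    refine Finset.sum_congr rfl fun b _ => Finset.sum_congr rfl fun t _ => ?_
    rw [smul_mul_smul_comm, koszulSign_xor_right, ← mul_assoc, koszulSign_mul_self, one_mul,
      smul_comm]

end QueerFamily

section EnvelopingAlgebra

variable {n l : ℕ}

theorem Ue_mul_Ue_sub (i j k m : Fin n) :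
    Ue i j * Ue k m - Ue k m * Ue i j = kd j k • Ue i m - kd m i • Ue k j := by
  have hrel := RingQuot.mkAlgHom_rel ℂ (QRel.ee i j k m)
  simp only [map_sub, map_mul, map_smul] at hrel
  exact hrel

theorem Ue_mul_Uf_sub (i j k m : Fin n) :
    Ue i j * Uf k m - Uf k m * Ue i j = kd j k • Uf i m - kd m i • Uf k j := by
  have hrel := RingQuot.mkAlgHom_rel ℂ (QRel.ef i j k m)
  simp only [map_sub, map_mul, map_smul] at hrel
  exact hrel

theorem Uf_mul_Uf_add (i j k m : Fin n) :
    Uf i j * Uf k m + Uf k m * Uf i j = kd j k • Ue i m + kd m i • Ue k j := by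
  have hrel := RingQuot.mkAlgHom_rel ℂ (QRel.ff i j k m)
  simp only [map_add, map_mul, map_smul] at hrel
  exact hrel

/-- The bijection `(p, a) ↦ bidx h p a` between pairs (block, position) and indices. -/
def blockEquiv (h : l ∣ n) : Fin (n / l) × Fin l ≃ Fin n :=
  finProdFinEquiv.trans (finCongr (Nat.div_mul_cancel h))

theorem blockEquiv_apply (h : l ∣ n) (i : Fin (n / l) × Fin l) :
    blockEquiv h i = bidx h i.1 i.2 :=
  Fin.ext (add_comm _ _)

/-- The generators of `U(Q(n))`, with rows and columns indexed by (block, position). -/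
def queerLetter (h : l ∣ n) (d : Letter (Fin (n / l) × Fin l)) : UQ n :=
  (if d.odd then Uf else Ue) (blockEquiv h d.row) (blockEquiv h d.col)

theorem isQueerFamily_queerLetter (h : l ∣ n) : IsQueerFamily (queerLetter h) := by
  have kd_smul (i j : Fin (n / l) × Fin l) (x : UQ n) :
      kd (blockEquiv h i) (blockEquiv h j) • x = if i = j then x else 0 := by
    simp only [kd, (blockEquiv h).injective.eq_iff, ite_smul, one_smul, zero_smul]
  have hfamily := IsQueerFamily.of_relations
    (e := fun i j => Ue (blockEquiv h i) (blockEquiv h j))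
    (f := fun i j => Uf (blockEquiv h i) (blockEquiv h j))
    (fun i j k m => by simp only [Ue_mul_Ue_sub, kd_smul])
    (fun i j k m => by simp only [Ue_mul_Uf_sub, kd_smul])
    (fun i j k m => by simp only [Uf_mul_Uf_add, kd_smul])
  convert hfamily using 2 with d
  cases hd : d.odd <;> simp [queerLetter, hd]

theorem adjoin_range_queerLetter (h : l ∣ n) :
    Algebra.adjoin ℂ (Set.range (queerLetter h)) = ⊤ := by
  rw [eq_top_iff, ← (AlgHom.range_eq_top _).2 (RingQuot.mkAlgHom_surjective ℂ (QRel n)),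
    ← Algebra.map_top, ← FreeAlgebra.adjoin_range_ι, AlgHom.map_adjoin, ← Set.range_comp]
  refine Algebra.adjoin_mono (Set.range_subset_iff.2 ?_)
  rintro (⟨i, j⟩ | ⟨i, j⟩)
  · exact ⟨⟨false, (blockEquiv h).symm i, (blockEquiv h).symm j⟩, by simp [queerLetter, Ue]⟩
  · exact ⟨⟨true, (blockEquiv h).symm i, (blockEquiv h).symm j⟩, by simp [queerLetter, Uf]⟩

theorem sergeev_queerLetter (h : l ∣ n) (M : ℕ) (a : Bool) (i j : Fin (n / l) × Fin l) :
    sergeev (queerLetter h) M a i j =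
      (if a then fU else eU) M (bidx h i.1 i.2) (bidx h j.1 j.2) := by
  rw [← blockEquiv_apply, ← blockEquiv_apply]
  induction M generalizing a i with
  | zero =>
    cases a <;> simp [sergeev, eU, fU, efU, kd, apply_ite (algebraMap ℂ (UQ n))]
  | succ M ih =>
    rw [sergeev, Fintype.sum_bool, add_comm]
    cases a <;> simp [ih, eU, fU, efU, queerLetter, powSign, ← (blockEquiv h).sum_comp]

theorem containsShifts_queerLetter (h : l ∣ n) : ContainsShifts (queerLetter h) (Ichi n l h) := by
  rintro ⟨a, ⟨p, r⟩, ⟨q, s⟩⟩ hd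
  refine Submodule.subset_span ⟨p, q, r, s, ?_, ?_⟩
  · simpa [Letter.offset] using hd
  · cases a <;> simp [shiftedLetter, queerLetter, blockEquiv_apply, Letter.character,
      and_comm]

variable {σ : UQ n →ₐ[ℂ] UQ n}

theorem map_queerLetter (h : l ∣ n) (hσe : ∀ i j : Fin n, σ (Ue i j) = Ue i j)
    (hσf : ∀ i j : Fin n, σ (Uf i j) = -Uf i j) (d : Letter (Fin (n / l) × Fin l)) :
    σ (queerLetter h d) = if d.odd then -queerLetter h d else queerLetter h d := by
  cases hd : d.odd <;> simp [queerLetter, hd, hσe, hσf]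

theorem wcond_iff (h : l ∣ n) (y : UQ n) : Wcond h σ y ↔
    ∀ d : Letter (Fin (n / l) × Fin l), d.offset < 0 →
      queerLetter h d * y - (if d.odd then σ y else y) * queerLetter h d ∈ Ichi n l h := by
  constructor
  · rintro hy ⟨a, ⟨p, r⟩, ⟨q, s⟩⟩ hd
    have hrs : (s : ℕ) < r := by simpa [Letter.offset] using hd
    cases a
    · simpa [queerLetter, blockEquiv_apply] using (hy p q r s hrs).1
    · simpa [queerLetter, blockEquiv_apply] using (hy p q r s hrs).2
  · intro hy p q r s hrs
    have heven := hy ⟨false, (p, r), (q, s)⟩ (by simpa [Letter.offset] using hrs)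
    have hodd := hy ⟨true, (p, r), (q, s)⟩ (by simpa [Letter.offset] using hrs)
    simpa [queerLetter, blockEquiv_apply] using And.intro heven hodd

theorem wcond_sergeev_queerLetter (h : l ∣ n) (hσe : ∀ i j : Fin n, σ (Ue i j) = Ue i j)
    (hσf : ∀ i j : Fin n, σ (Uf i j) = -Uf i j) {i j : Fin (n / l) × Fin l}
    (hi : (i.2 : ℕ) + 1 = l) (hj : (j.2 : ℕ) = 0) (M : ℕ) (a : Bool) :
    Wcond h σ (sergeev (queerLetter h) M a i j) := by
  refine (wcond_iff h _).2 fun d hd => ?_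
  have hcomm := (isQueerFamily_queerLetter h).superComm_sergeev_eq_zero hd hi hj M a
  rw [superComm_apply, ← smul_mul_assoc] at hcomm
  have htwist : (if d.odd then σ (sergeev (queerLetter h) M a i j) else
      sergeev (queerLetter h) M a i j) =
      koszulSign d.odd a • sergeev (queerLetter h) M a i j := by
    cases d.odd
    · simp
    · exact (map_sergeev (map_queerLetter h hσe hσf) M a i j).trans (koszulSign_true_smul ..).symm
  rw [htwist, hcomm]
  exact zero_mem _

theorem Wcond.mem_whittaker {h : l ∣ n} {y : UQ n} (hy : Wcond h σ y) :
    y ∈ whittaker (queerLetter h) (Ichi n l h) := by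
  refine _root_.mem_whittaker.2 fun d hd => ?_
  have hchar : d.character • (if d.odd then σ y else y) = d.character • y := by
    cases hodd : d.odd <;> simp [Letter.character, hodd]
  have hsplit : shiftedLetter (queerLetter h) d * y =
      (queerLetter h d * y - (if d.odd then σ y else y) * queerLetter h d) +
        (if d.odd then σ y else y) * shiftedLetter (queerLetter h) d := by
    rw [shiftedLetter, sub_mul, mul_sub, smul_one_mul, mul_smul_one, hchar]
    abel
  rw [hsplit]
  exact add_mem ((wcond_iff h y).1 hy d hd)
    (Submodule.smul_mem _ _ (containsShifts_queerLetter h d hd))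

end EnvelopingAlgebra

/-- Let `l ∣ n`.  The elements `π(e^{(l+k-1)}_{lp, l(q-1)+1})` and
`π(f^{(l+k-1)}_{lp, l(q-1)+1})`, for `1 ≤ p,q ≤ n/l` and `1 ≤ k ≤ l`, lie in the finite
W-algebra `W_χ` and generate `W_χ` as an algebra (every element of `W_χ` is `π(z)` for
some `z` in the subalgebra of `U(Q(n))` generated by these elements; recall that the
product of `W_χ` is `π(y₁)·π(y₂) = π(y₁y₂)`).  Here `σ` is the parity involution of
`U(Q(n))`, used to express super-commutators. -/
theorem statement3 (n l : ℕ) (hn : 0 < n) (hl : 0 < l) (h : l ∣ n)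
    (σ : UQ n →ₐ[ℂ] UQ n)
    (hσe : ∀ i j : Fin n, σ (Ue i j) = Ue i j)
    (hσf : ∀ i j : Fin n, σ (Uf i j) = -Uf i j) :
    (∀ (p q : Fin (n / l)) (k : Fin l),
        piq n l h (eU (l + k.val) (bidx h p ⟨l - 1, by omega⟩) (bidx h q ⟨0, hl⟩)) ∈
          WchiSet n l h σ ∧
        piq n l h (fU (l + k.val) (bidx h p ⟨l - 1, by omega⟩) (bidx h q ⟨0, hl⟩)) ∈
          WchiSet n l h σ) ∧
    (∀ w ∈ WchiSet n l h σ,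
      ∃ z ∈ Algebra.adjoin ℂ
          { x : UQ n | ∃ (p q : Fin (n / l)) (k : Fin l),
              x = eU (l + k.val) (bidx h p ⟨l - 1, by omega⟩) (bidx h q ⟨0, hl⟩) ∨
              x = fU (l + k.val) (bidx h p ⟨l - 1, by omega⟩) (bidx h q ⟨0, hl⟩) },
        piq n l h z = w) := by
  refine ⟨fun p q k => ?_, ?_⟩
  · have hW (a : Bool) := wcond_sergeev_queerLetter h hσe hσf (i := (p, ⟨l - 1, by omega⟩))
      (j := (q, ⟨0, hl⟩)) (Nat.sub_add_cancel hl) rfl (l + k) a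
    simp only [sergeev_queerLetter] at hW
    exact ⟨⟨_, hW false, rfl⟩, ⟨_, hW true, rfl⟩⟩
  · rintro _ ⟨y, hy, rfl⟩
    obtain ⟨z, hz, x, hx, rfl⟩ := Submodule.mem_sup.1
      ((isQueerFamily_queerLetter h).whittaker_le_adjoin_sup_ideal (adjoin_range_queerLetter h)
        (containsShifts_queerLetter h) hy.mem_whittaker)
    refine ⟨z, Algebra.adjoin_mono ?_ hz, (Submodule.Quotient.eq _).2 ?_⟩
    · rintro _ ⟨a, k, ⟨p, r⟩, ⟨q, s⟩, hk, hr, hs, rfl⟩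
      obtain rfl : r = ⟨l - 1, Nat.sub_lt hl one_pos⟩ := Fin.ext (Nat.eq_sub_of_add_eq hr)
      obtain rfl : s = ⟨0, hl⟩ := Fin.ext hs
      exact ⟨p, q, ⟨k, hk⟩, by cases a <;> simp [sergeev_queerLetter]⟩
    · rw [sub_add_cancel_left]
      exact neg_mem hx
end
end
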